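/- arXiv:2307.06453 — 3 statements merged into one kernel-verified Lean document; each statement's English description precedes it below -/
import Mathlib

section
/- Fix a constant ε > 0. For every δ > 0 there exists M such that the following holds for all n, all p ∈ (0,1) with n·p·(1−p) ≥ M, and the random digraph D ~ 𝔻(n,p): for any pair of bisections c, c' : V(D) → {1,2} with overlap α ∈ [ε, 1−ε], and any vertex v, letting E_v and E_v' be the events that v is majority-coloured with respect to c and with respect to c' respectively: (1) |Pr[E_v] − 1/2| ≤ δ; (2) if c(v) = c'(v) then |Pr[E_v ∩ E_v'] − (1/π)·arctan(√(α/(1−α)))| ≤ δ; (3) if c(v) ≠ c'(v) then |Pr[E_v ∩ E_v'] − (1/π)·arctan(√((1−α)/α))| ≤ δ. -/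
open MeasureTheory Filter

/-- Bernoulli measure on `Bool` with parameter `p`. -/
noncomputable def bernoulliM (p : ℝ) : Measure Bool :=
  (Real.toNNReal p) • Measure.dirac true + (Real.toNNReal (1 - p)) • Measure.dirac false

instance (p : ℝ) : IsFiniteMeasure (bernoulliM p) := by
  unfold bernoulliM; infer_instance

/-- The binomial random digraph measure `𝔻(n,p)`: each of the `n(n-1)` possible arcs
(ordered pairs of distinct vertices) is present independently with probability `p`
(the diagonal entries of the matrix are ignored, via `DiAdj`). -/
noncomputable def diMeasure (n : ℕ) (p : ℝ) : Measure (Fin n → Fin n → Bool) :=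
  Measure.pi fun _ => Measure.pi fun _ => bernoulliM p

/-- The arc relation of the digraph encoded by the matrix `A`. -/
def DiAdj {n : ℕ} (A : Fin n → Fin n → Bool) (v w : Fin n) : Prop :=
  v ≠ w ∧ A v w = true

/-- A vertex `v` is *majority-coloured* with respect to the colouring `c` if at most
half of its out-neighbours have the same colour as `v`. -/
def MajorityAt {n : ℕ} {α : Type*} (A : Fin n → Fin n → Bool) (c : Fin n → α) (v : Fin n) :
    Prop :=
  2 * ({w | DiAdj A v w ∧ c w = c v} : Set (Fin n)).ncard ≤
    ({w | DiAdj A v w} : Set (Fin n)).ncard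

/-- A red-blue colouring of `Fin n` is a *bisection* if its two colour classes
differ in size by at most 1. -/
def IsBisection {n : ℕ} (c : Fin n → Bool) : Prop :=
  |(({v | c v = true} : Set (Fin n)).ncard : ℤ) -
    (({v | c v = false} : Set (Fin n)).ncard : ℤ)| ≤ 1

/-- The overlap of two 2-colourings: the fraction of vertices on which they agree. -/
noncomputable def overlap {n : ℕ} (c c' : Fin n → Bool) : ℝ :=
  (({v | c v = c' v} : Set (Fin n)).ncard : ℝ) / n

open Topology ProbabilityTheory

lemma aux_factor (p x : ℝ) (hp : 0 < p) (hp1 : p < 1) (hx : |x| ≤ 1) :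
    ‖(((1 - p : ℝ) : ℂ) * Complex.exp (((-p * x : ℝ) : ℂ) * Complex.I)
        + (p : ℂ) * Complex.exp ((((1 - p) * x : ℝ) : ℂ) * Complex.I))
      - Complex.exp (((-(p * (1 - p) * x ^ 2 / 2) : ℝ) : ℂ))‖ ≤ 2 * (p * (1 - p)) * |x| ^ 3 := by
  have key : ∀ y : ℝ, |y| ≤ 1 →
      ‖Complex.exp ((y : ℂ) * Complex.I) - (1 + y * Complex.I - y ^ 2 / 2)‖ ≤ |y| ^ 3 := by
    intro y hy
    have hn : ‖(y : ℂ) * Complex.I‖ = |y| := by simp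
    have h := Complex.exp_bound (x := (y : ℂ) * Complex.I) (by rw [hn]; exact hy) (n := 3) (by norm_num)
    rw [hn] at h
    have e : (∑ m ∈ Finset.range 3, ((y : ℂ) * Complex.I) ^ m / (m.factorial : ℂ))
        = 1 + y * Complex.I - y ^ 2 / 2 := by
      simp [Finset.sum_range_succ, mul_pow]
      ring
    rw [e] at h
    refine h.trans ?_
    have : (0 : ℝ) ≤ |y| ^ 3 := by positivity
    norm_num [Nat.factorial]
    nlinarith
  have hq : 0 < 1 - p := by linarith
  have h1 := key (-p * x) (by
    rw [abs_mul, abs_neg, abs_of_pos hp]; nlinarith [abs_nonneg x])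
  have h2 := key ((1 - p) * x) (by
    rw [abs_mul, abs_of_pos hq]; nlinarith [abs_nonneg x])
  set z : ℝ := -(p * (1 - p) * x ^ 2 / 2) with hz
  have hx2 : x ^ 2 ≤ 1 := by rw [← sq_abs]; nlinarith [abs_nonneg x]
  have hpq : p * (1 - p) ≤ 1 := by nlinarith
  have hpq0 : 0 < p * (1 - p) := mul_pos hp hq
  have hzabs : |z| = p * (1 - p) * x ^ 2 / 2 := by
    rw [hz, abs_neg, abs_of_nonneg (by positivity)]
  have h3 : ‖Complex.exp (z : ℂ) - 1 - z‖ ≤ |z| ^ 2 := by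
    have := Complex.norm_exp_sub_one_sub_id_le (x := (z : ℂ)) (by
      simp only [Complex.norm_real, Real.norm_eq_abs]; rw [hzabs]; nlinarith)
    simpa using this
  have e : (((1 - p : ℝ) : ℂ) * Complex.exp (((-p * x : ℝ) : ℂ) * Complex.I)
        + (p : ℂ) * Complex.exp ((((1 - p) * x : ℝ) : ℂ) * Complex.I)) - Complex.exp (z : ℂ)
      = ((1 - p : ℝ) : ℂ) * (Complex.exp (((-p * x : ℝ) : ℂ) * Complex.I)
          - (1 + ((-p * x : ℝ) : ℂ) * Complex.I - ((-p * x : ℝ) : ℂ) ^ 2 / 2))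
        + (p : ℂ) * (Complex.exp ((((1 - p) * x : ℝ) : ℂ) * Complex.I)
          - (1 + (((1 - p) * x : ℝ) : ℂ) * Complex.I - (((1 - p) * x : ℝ) : ℂ) ^ 2 / 2))
        - (Complex.exp (z : ℂ) - 1 - z) := by
    rw [hz]; push_cast; ring
  rw [e]
  have n1 : ‖((1 - p : ℝ) : ℂ)‖ = 1 - p := by
    rw [Complex.norm_real, Real.norm_eq_abs, abs_of_pos hq]
  have n2 : ‖(p : ℂ)‖ = p := by
    rw [Complex.norm_real, Real.norm_eq_abs, abs_of_pos hp]
  refine (norm_sub_le _ _).trans ?_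
  refine (add_le_add ((norm_add_le _ _).trans (add_le_add (norm_mul_le _ _) (norm_mul_le _ _)))
    h3).trans ?_
  rw [n1, n2]
  have h1' := mul_le_mul_of_nonneg_left h1 hq.le
  have h2' := mul_le_mul_of_nonneg_left h2 hp.le
  refine (add_le_add (add_le_add h1' h2') le_rfl).trans ?_
  rw [hzabs, abs_mul, abs_mul, abs_neg, abs_of_pos hp, abs_of_pos hq]
  have hx3 : 0 ≤ |x| ^ 3 := by positivity
  have hx4 : (x ^ 2) ^ 2 ≤ |x| ^ 3 := by
    rw [← sq_abs x]
    calc (|x| ^ 2) ^ 2 = |x| ^ 3 * |x| := by ring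
      _ ≤ |x| ^ 3 * 1 := by gcongr
      _ = _ := by ring
  have b1 : (1 - p) * (p * |x|) ^ 3 + p * ((1 - p) * |x|) ^ 3 ≤ p * (1 - p) * |x| ^ 3 := by
    have : (1 - p) * (p * |x|) ^ 3 + p * ((1 - p) * |x|) ^ 3
      = p * (1 - p) * |x| ^ 3 * (p ^ 2 + (1 - p) ^ 2) := by ring
    rw [this]
    have : p ^ 2 + (1 - p) ^ 2 ≤ 1 := by nlinarith
    exact mul_le_of_le_one_right (by positivity) this
  have b2 : (p * (1 - p) * x ^ 2 / 2) ^ 2 ≤ p * (1 - p) * |x| ^ 3 := by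
    calc (p * (1 - p) * x ^ 2 / 2) ^ 2 = (p * (1 - p)) * (p * (1 - p)) * (x ^ 2) ^ 2 / 4 := by ring
      _ ≤ (p * (1 - p)) * 1 * |x| ^ 3 / 4 := by gcongr
      _ ≤ _ := by nlinarith [mul_nonneg hpq0.le hx3]
  linarith

lemma aux_prod {ι : Type*} (s : Finset ι) (a b : ι → ℂ) (ha : ∀ i ∈ s, ‖a i‖ ≤ 1)
    (hb : ∀ i ∈ s, ‖b i‖ ≤ 1) :
    ‖∏ i ∈ s, a i - ∏ i ∈ s, b i‖ ≤ ∑ i ∈ s, ‖a i - b i‖ := by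
  classical
  induction s using Finset.induction_on with
  | empty => simp
  | insert j s hj ih =>
    rw [Finset.prod_insert hj, Finset.prod_insert hj, Finset.sum_insert hj]
    have ih' := ih (fun i hi => ha i (Finset.mem_insert_of_mem hi))
      (fun i hi => hb i (Finset.mem_insert_of_mem hi))
    have e : a j * ∏ i ∈ s, a i - b j * ∏ i ∈ s, b i
      = (a j - b j) * ∏ i ∈ s, a i + b j * (∏ i ∈ s, a i - ∏ i ∈ s, b i) := by ring
    rw [e]
    refine (norm_add_le _ _).trans (add_le_add ?_ ?_)
    · rw [norm_mul]
      refine mul_le_of_le_one_right (norm_nonneg _) ?_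
      rw [norm_prod]
      exact Finset.prod_le_one (fun _ _ => norm_nonneg _)
        (fun i hi => ha i (Finset.mem_insert_of_mem hi))
    · rw [norm_mul]
      exact (mul_le_of_le_one_left (norm_nonneg _) (hb j (Finset.mem_insert_self _ _))).trans ih'

lemma aux_cf_bound (n : ℕ) (p : ℝ) (hp : 0 < p) (hp1 : p < 1) (x : Fin n → ℝ) (L : ℝ)
    (hL : ∀ w, |x w| ≤ L) (hL1 : L ≤ 1) :
    ‖∏ w, (((1 - p : ℝ) : ℂ) + (p : ℂ) * Complex.exp ((x w : ℂ) * Complex.I))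
      - Complex.exp (((p * ∑ w, x w : ℝ) : ℂ) * Complex.I)
        * Complex.exp (((-(p * (1 - p) * (∑ w, x w ^ 2) / 2) : ℝ) : ℂ))‖
      ≤ n * (2 * (p * (1 - p)) * L ^ 3) := by
  have hq : 0 < 1 - p := by linarith
  have e1 : ∏ w, (((1 - p : ℝ) : ℂ) + (p : ℂ) * Complex.exp ((x w : ℂ) * Complex.I))
      = Complex.exp (((p * ∑ w, x w : ℝ) : ℂ) * Complex.I) *
        ∏ w, (((1 - p : ℝ) : ℂ) * Complex.exp (((-p * x w : ℝ) : ℂ) * Complex.I)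
        + (p : ℂ) * Complex.exp ((((1 - p) * x w : ℝ) : ℂ) * Complex.I)) := by
    have : Complex.exp (((p * ∑ w, x w : ℝ) : ℂ) * Complex.I)
        = ∏ w, Complex.exp (((p * x w : ℝ) : ℂ) * Complex.I) := by
      rw [← Complex.exp_sum, Finset.mul_sum]
      push_cast
      rw [Finset.sum_mul]
    rw [this, ← Finset.prod_mul_distrib]
    refine Finset.prod_congr rfl fun w _ => ?_
    rw [mul_add, mul_left_comm, mul_left_comm (Complex.exp _), ← Complex.exp_add, ← Complex.exp_add]
    have a1 : ((p * x w : ℝ) : ℂ) * Complex.I + ((-p * x w : ℝ) : ℂ) * Complex.I = 0 := by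
      push_cast; ring
    have a2 : ((p * x w : ℝ) : ℂ) * Complex.I + (((1 - p) * x w : ℝ) : ℂ) * Complex.I
      = x w * Complex.I := by
      push_cast; ring
    rw [a1, a2, Complex.exp_zero, mul_one]
  have e2 : Complex.exp (((-(p * (1 - p) * (∑ w, x w ^ 2) / 2) : ℝ) : ℂ))
      = ∏ w, Complex.exp (((-(p * (1 - p) * x w ^ 2 / 2) : ℝ) : ℂ)) := by
    rw [← Complex.exp_sum, ← Complex.ofReal_sum]
    congr 2
    rw [Finset.mul_sum, Finset.sum_div, Finset.sum_neg_distrib]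
  rw [e1, e2, ← mul_sub, norm_mul, Complex.norm_exp_ofReal_mul_I, one_mul]
  refine (aux_prod _ _ _ ?_ ?_).trans ?_
  · intro w _
    refine (norm_add_le _ _).trans ?_
    rw [norm_mul, norm_mul, Complex.norm_exp_ofReal_mul_I, Complex.norm_exp_ofReal_mul_I,
      Complex.norm_real, Complex.norm_real, Real.norm_eq_abs, Real.norm_eq_abs,
      abs_of_pos hp, abs_of_pos hq]
    linarith
  · intro w _
    rw [← Complex.ofReal_exp, Complex.norm_real, Real.norm_eq_abs, Real.abs_exp, Real.exp_le_one_iff]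
    have : 0 ≤ p * (1 - p) * x w ^ 2 / 2 := by positivity
    linarith
  · refine (Finset.sum_le_card_nsmul _ _ (2 * (p * (1 - p)) * L ^ 3) ?_).trans ?_
    · intro w _
      refine (aux_factor p (x w) hp hp1 ((hL w).trans hL1)).trans ?_
      have := hL w
      gcongr
    · simp

lemma aux_cf_tendsto (n : ℕ → ℕ) (p : ℕ → ℝ) (hp : ∀ k, 0 < p k) (hp1 : ∀ k, p k < 1)
    (hinf : Tendsto (fun k => (n k : ℝ) * p k * (1 - p k)) atTop atTop)
    (g : ∀ k, Fin (n k) → ℝ) (K B v : ℝ) (hK : ∀ k w, |g k w| ≤ K)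
    (hB : ∀ k, |∑ w, g k w| ≤ B)
    (hv : Tendsto (fun k => (∑ w, g k w ^ 2) / (n k : ℝ)) atTop (𝓝 v)) :
    Tendsto (fun k => ∏ w, (((1 - p k : ℝ) : ℂ) + (p k : ℂ) *
      Complex.exp (((g k w / √((n k : ℝ) * p k * (1 - p k)) : ℝ) : ℂ) * Complex.I)))
      atTop (𝓝 (Complex.exp ((-(v / 2) : ℝ) : ℂ))) := by
  set τ : ℕ → ℝ := fun k => √((n k : ℝ) * p k * (1 - p k)) with hτ
  have hτinf : Tendsto τ atTop atTop := Real.tendsto_sqrt_atTop.comp hinf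
  have hpos : ∀ᶠ k in atTop, 0 < τ k := hτinf.eventually_gt_atTop 0
  set K' := max K 1 with hK'
  have hK'0 : 0 < K' := lt_of_lt_of_le one_pos (le_max_right _ _)
  set main : ℕ → ℂ := fun k =>
    Complex.exp (((p k * ∑ w, g k w / τ k : ℝ) : ℂ) * Complex.I)
        * Complex.exp (((-(p k * (1 - p k) * (∑ w, (g k w / τ k) ^ 2) / 2) : ℝ) : ℂ)) with hmain
  have hmain_t : Tendsto main atTop (𝓝 (Complex.exp ((-(v / 2) : ℝ) : ℂ))) := by
    have t1 : Tendsto (fun k => p k * ∑ w, g k w / τ k) atTop (𝓝 0) := by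
      rw [tendsto_zero_iff_abs_tendsto_zero]
      have : Tendsto (fun k => B / τ k) atTop (𝓝 0) := hτinf.const_div_atTop B
      refine squeeze_zero' (Eventually.of_forall fun k => abs_nonneg _) ?_ this
      filter_upwards [hpos] with k hk
      simp only [Function.comp]
      rw [← Finset.sum_div, abs_mul, abs_div, abs_of_pos hk, abs_of_pos (hp k)]
      have : |∑ w, g k w| / τ k ≤ B / τ k := by gcongr; exact hB k
      refine le_trans ?_ this
      exact mul_le_of_le_one_left (by positivity) (hp1 k).le
    have t2 : Tendsto (fun k => -(p k * (1 - p k) * (∑ w, (g k w / τ k) ^ 2) / 2)) atTop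
        (𝓝 (-(v / 2))) := by
      refine ((hv.div_const 2).neg).congr' ?_
      filter_upwards [hpos] with k hk
      have h2 : τ k ^ 2 = (n k : ℝ) * p k * (1 - p k) := by
        have : 0 < (n k : ℝ) * p k * (1 - p k) := Real.sqrt_pos.mp hk
        rw [hτ]; exact Real.sq_sqrt this.le
      have hq : 0 < 1 - p k := by linarith [hp1 k]
      have hn : (n k : ℝ) ≠ 0 := by
        intro h0
        have : 0 < (n k : ℝ) * p k * (1 - p k) := Real.sqrt_pos.mp hk
        rw [h0] at this; simp at this
      have hpk := (hp k).ne'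
      simp_rw [div_pow]
      rw [← Finset.sum_div, h2]
      field_simp
    have c1 := (Complex.continuous_exp.tendsto _).comp
      ((((Complex.continuous_ofReal.tendsto 0).comp t1).mul_const Complex.I))
    have c2 := (Complex.continuous_exp.tendsto _).comp
      ((Complex.continuous_ofReal.tendsto _).comp t2)
    have := c1.mul c2
    simpa [hmain, Function.comp_def] using this
  have hdiff : Tendsto (fun k => (∏ w, (((1 - p k : ℝ) : ℂ) + (p k : ℂ) *
      Complex.exp (((g k w / τ k : ℝ) : ℂ) * Complex.I))) - main k) atTop (𝓝 0) := by
    rw [tendsto_zero_iff_norm_tendsto_zero]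
    have t : Tendsto (fun k => 2 * K' ^ 3 / τ k) atTop (𝓝 0) := hτinf.const_div_atTop _
    refine squeeze_zero' (Eventually.of_forall fun k => norm_nonneg _) ?_ t
    filter_upwards [hpos, hτinf.eventually_ge_atTop K'] with k hk hk2
    refine (aux_cf_bound (n k) (p k) (hp k) (hp1 k) (fun w => g k w / τ k) (K' / τ k) ?_ ?_).trans ?_
    · intro w
      rw [abs_div, abs_of_pos hk]
      gcongr
      exact (hK k w).trans (le_max_left _ _)
    · rw [div_le_one hk]; exact hk2
    · have h2 : τ k ^ 2 = (n k : ℝ) * p k * (1 - p k) := by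
        have : 0 < (n k : ℝ) * p k * (1 - p k) := Real.sqrt_pos.mp hk
        rw [hτ]; exact Real.sq_sqrt this.le
      have : (n k : ℝ) * (2 * (p k * (1 - p k)) * (K' / τ k) ^ 3)
        = 2 * (τ k ^ 2) * (K' / τ k) ^ 3 := by rw [h2]; ring
      rw [this]
      apply le_of_eq
      field_simp
  have := hdiff.add hmain_t
  simpa using this

instance aux_bern_prob (p : ℝ) [h : Fact (0 < p ∧ p < 1)] : IsProbabilityMeasure (bernoulliM p) := by
  constructor
  have h1 := h.out.1
  have h2 := h.out.2
  unfold bernoulliM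
  rw [Measure.add_apply, Measure.smul_apply, Measure.smul_apply,
    measure_univ, measure_univ]
  change (p.toNNReal : ENNReal) * 1 + ((1 - p).toNNReal : ENNReal) * 1 = 1
  rw [mul_one, mul_one, ← ENNReal.coe_add, ← Real.toNNReal_add h1.le (by linarith)]
  simp

lemma aux_row_cf (n : ℕ) (p : ℝ) (hp : 0 < p) (hp1 : p < 1) (x : Fin n → ℝ) :
    ∫ A : Fin n → Bool, Complex.exp (((∑ w, x w * (if A w then 1 else 0) : ℝ) : ℂ) * Complex.I)
      ∂(Measure.pi fun _ => bernoulliM p)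
    = ∏ w, (((1 - p : ℝ) : ℂ) + (p : ℂ) * Complex.exp ((x w : ℂ) * Complex.I)) := by
  have : Fact (0 < p ∧ p < 1) := ⟨hp, hp1⟩
  have e : ∀ A : Fin n → Bool,
      Complex.exp (((∑ w, x w * (if A w then 1 else 0) : ℝ) : ℂ) * Complex.I)
      = ∏ w, Complex.exp (((x w * (if A w then 1 else 0) : ℝ) : ℂ) * Complex.I) := by
    intro A
    rw [← Complex.exp_sum, Complex.ofReal_sum, Finset.sum_mul]
  simp_rw [e]
  rw [integral_fintype_prod_eq_prod (f := fun w (a : Bool) =>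
    Complex.exp (((x w * (if a then 1 else 0) : ℝ) : ℂ) * Complex.I))]
  refine Finset.prod_congr rfl fun w _ => ?_
  unfold bernoulliM
  have i1 : ∀ (c : NNReal) (b : Bool), Integrable (fun a : Bool =>
    Complex.exp (((x w * (if a then 1 else 0) : ℝ) : ℂ) * Complex.I)) (c • Measure.dirac b) :=
    fun c b => Integrable.of_finite
  rw [integral_add_measure (i1 _ _) (i1 _ _), integral_smul_nnreal_measure,
    integral_smul_nnreal_measure, integral_dirac, integral_dirac]
  have a1 : ((p.toNNReal : NNReal) : ℝ) = p := Real.coe_toNNReal _ hp.le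
  have a2 : (((1 - p).toNNReal : NNReal) : ℝ) = 1 - p := Real.coe_toNNReal _ (by linarith)
  rw [NNReal.smul_def, NNReal.smul_def, a1, a2]
  simp
  ring

lemma aux_polar : ∃ C : ENNReal, ∀ (S : Set (ℝ × ℝ)) (T : Set ℝ), MeasurableSet S →
    MeasurableSet T →
    (∀ r θ : ℝ, 0 < r → -Real.pi < θ → θ < Real.pi →
      ((r * Real.cos θ, r * Real.sin θ) ∈ S ↔ θ ∈ T)) →
    ((gaussianReal 0 1).prod (gaussianReal 0 1)) S
      = C * volume (T ∩ Set.Ioo (-Real.pi) Real.pi) := by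
  refine ⟨∫⁻ r in Set.Ioi (0 : ℝ), ENNReal.ofReal r *
    ENNReal.ofReal ((2 * Real.pi)⁻¹ * Real.exp (-(r ^ 2) / 2)), ?_⟩
  intro S T hS hT h
  rw [gaussianReal_of_var_ne_zero 0 (one_ne_zero), prod_withDensity (by fun_prop) (by fun_prop),
    withDensity_apply _ hS, ← lintegral_indicator hS, ← Measure.volume_eq_prod,
    ← lintegral_comp_polarCoord_symm]
  have e : ∀ q ∈ polarCoord.target,
      ENNReal.ofReal q.1 • (S.indicator (fun z : ℝ × ℝ => gaussianPDF 0 1 z.1 * gaussianPDF 0 1 z.2)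
        (polarCoord.symm q))
      = (ENNReal.ofReal q.1 * ENNReal.ofReal ((2 * Real.pi)⁻¹ * Real.exp (-(q.1 ^ 2) / 2)))
        * (T.indicator 1 q.2) := by
    rintro ⟨r, θ⟩ hq
    simp only [polarCoord_target, Set.mem_prod, Set.mem_Ioi, Set.mem_Ioo] at hq
    obtain ⟨hr, hθ1, hθ2⟩ := hq
    have hh := h r θ hr hθ1 hθ2
    simp only [polarCoord_symm_apply, smul_eq_mul]
    by_cases hT' : θ ∈ T
    · rw [Set.indicator_of_mem (hh.2 hT'), Set.indicator_of_mem hT']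
      simp only [gaussianPDF, Pi.one_apply, mul_one]
      rw [← ENNReal.ofReal_mul (gaussianPDFReal_nonneg _ _ _)]
      congr 2
      simp only [gaussianPDFReal]
      have e1 : ∀ a b c : ℝ, (a * Real.exp b) * (a * Real.exp c) = a ^ 2 * Real.exp (b + c) := by
        intro a b c; rw [Real.exp_add]; ring
      rw [e1]
      congr 1
      · simp only [NNReal.coe_one, mul_one]
        rw [inv_pow, Real.sq_sqrt (by positivity)]
      · congr 1
        simp only [NNReal.coe_one, mul_one, sub_zero]
        have := Real.sin_sq_add_cos_sq θ
        rw [mul_pow, mul_pow]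
        linear_combination (-(r ^ 2) / 2) * this
    · rw [Set.indicator_of_notMem (fun hc => hT' (hh.1 hc)), Set.indicator_of_notMem hT']
      simp
  rw [setLIntegral_congr_fun polarCoord.open_target.measurableSet e]
  rw [polarCoord_target, Measure.volume_eq_prod, ← Measure.prod_restrict,
    lintegral_prod_mul (f := fun r : ℝ => ENNReal.ofReal r *
      ENNReal.ofReal ((2 * Real.pi)⁻¹ * Real.exp (-(r ^ 2) / 2))) (g := T.indicator 1)
      (by fun_prop) (measurable_one.indicator hT).aemeasurable]
  rw [lintegral_indicator_one hT, Measure.restrict_apply hT]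

lemma aux_angle (s t : ℝ) (hs : 0 < s) (ht : 0 < t) (r θ : ℝ) (hr : 0 < r) (h1 : -Real.pi < θ)
    (h2 : θ < Real.pi) :
    t * |r * Real.sin θ| ≤ s * (r * Real.cos θ) ↔
      θ ∈ Set.Icc (-Real.arctan (s / t)) (Real.arctan (s / t)) := by
  have e : t * |r * Real.sin θ| ≤ s * (r * Real.cos θ) ↔ t * |Real.sin θ| ≤ s * Real.cos θ := by
    rw [abs_mul, abs_of_pos hr]
    constructor
    · intro h
      refine le_of_mul_le_mul_left ?_ hr
      linarith
    · intro h
      have := mul_le_mul_of_nonneg_left h hr.le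
      linarith
  rw [e]
  have a1 := Real.arctan_lt_pi_div_two (s / t)
  by_cases hc : -(Real.pi / 2) < θ ∧ θ < Real.pi / 2
  · have hcos : 0 < Real.cos θ := Real.cos_pos_of_mem_Ioo hc
    have hsin : Real.sin θ = Real.tan θ * Real.cos θ := (Real.tan_mul_cos hcos.ne').symm
    rw [hsin, abs_mul, abs_of_pos hcos, ← mul_assoc, mul_le_mul_iff_left₀ hcos, mul_comm,
      ← le_div_iff₀ ht, abs_le, Set.mem_Icc]
    have ha : Real.arctan (Real.tan θ) = θ := Real.arctan_tan hc.1 hc.2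
    conv_rhs => rw [← ha]
    rw [← Real.arctan_neg, Real.arctan_le_arctan_iff, Real.arctan_le_arctan_iff]
  · constructor
    · intro h
      exfalso
      have hcos : Real.cos θ ≤ 0 := by
        by_contra hcon
        push Not at hcon
        apply hc
        constructor
        · by_contra h'
          push Not at h'
          have := Real.cos_nonpos_of_pi_div_two_le_of_le (x := -θ) (by linarith) (by
            have := Real.pi_pos; linarith)
          rw [Real.cos_neg] at this
          linarith
        · by_contra h'
          push Not at h'
          have := Real.cos_nonpos_of_pi_div_two_le_of_le (x := θ) (by linarith) (by
            have := Real.pi_pos; linarith)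
          linarith
      have h0 : s * Real.cos θ ≤ 0 := by nlinarith
      have h0' : 0 ≤ t * |Real.sin θ| := by positivity
      have hs0 : Real.cos θ = 0 := by
        have : s * Real.cos θ = 0 := by linarith
        rcases mul_eq_zero.1 this with h | h
        · linarith
        · exact h
      have ht0 : Real.sin θ = 0 := by
        have : t * |Real.sin θ| = 0 := by linarith
        rcases mul_eq_zero.1 this with h | h
        · linarith
        · exact abs_eq_zero.1 h
      have := Real.sin_sq_add_cos_sq θ
      rw [hs0, ht0] at this
      norm_num at this
    · rintro ⟨h3, h4⟩
      exact absurd ⟨by linarith, by linarith⟩ hc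

lemma aux_gauss_scale (a : NNReal) :
    gaussianReal 0 a = (gaussianReal 0 1).map (√(a : ℝ) * ·) := by
  rw [gaussianReal_map_const_mul]
  congr 1
  · simp
  · ext
    simp

lemma aux_cone (a b : NNReal) (ha : 0 < a) (hb : 0 < b) :
    ((gaussianReal 0 a).prod (gaussianReal 0 b)) {z | |z.2| ≤ z.1}
      = ENNReal.ofReal (1 / Real.pi * Real.arctan (√((a : ℝ) / b))) := by
  obtain ⟨C, hC⟩ := aux_polar
  have hpi := Real.pi_pos
  have hs : 0 < √(a : ℝ) := Real.sqrt_pos.2 (by exact_mod_cast ha)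
  have ht : 0 < √(b : ℝ) := Real.sqrt_pos.2 (by exact_mod_cast hb)
  have hm : MeasurableSet {z : ℝ × ℝ | |z.2| ≤ z.1} :=
    (isClosed_le (by fun_prop) (by fun_prop)).measurableSet
  have hm2 : MeasurableSet {z : ℝ × ℝ | √(b : ℝ) * |z.2| ≤ √(a : ℝ) * z.1} :=
    (isClosed_le (by fun_prop) (by fun_prop)).measurableSet
  have h1 := hC Set.univ Set.univ MeasurableSet.univ MeasurableSet.univ (by simp)
  rw [measure_univ, Set.univ_inter, Real.volume_Ioo] at h1
  rw [aux_gauss_scale a, aux_gauss_scale b,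
    Measure.map_prod_map _ _ (by fun_prop) (by fun_prop), Measure.map_apply (by fun_prop) hm]
  have hpre : Prod.map (fun x => √(a : ℝ) * x) (fun x => √(b : ℝ) * x) ⁻¹' {z : ℝ × ℝ | |z.2| ≤ z.1}
      = {z : ℝ × ℝ | √(b : ℝ) * |z.2| ≤ √(a : ℝ) * z.1} := by
    ext z
    simp [abs_mul, abs_of_pos ht]
  rw [hpre, hC _ _ hm2 measurableSet_Icc (fun r θ hr h1 h2 => aux_angle _ _ hs ht r θ hr h1 h2)]
  have a1 := Real.arctan_lt_pi_div_two (√(a : ℝ) / √(b : ℝ))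
  have a0 : 0 < Real.arctan (√(a : ℝ) / √(b : ℝ)) := by
    rw [Real.arctan_pos]; positivity
  have hsub : Set.Icc (-Real.arctan (√(a : ℝ) / √(b : ℝ))) (Real.arctan (√(a : ℝ) / √(b : ℝ)))
      ⊆ Set.Ioo (-Real.pi) Real.pi :=
    fun x hx => ⟨by linarith [hx.1], by linarith [hx.2]⟩
  rw [Set.inter_eq_left.2 hsub, Real.volume_Icc,
    Real.sqrt_div (by positivity)]
  set A := Real.arctan (√(a : ℝ) / √(b : ℝ))
  have : ENNReal.ofReal (A - -A) = ENNReal.ofReal (Real.pi - -Real.pi) * ENNReal.ofReal (1 / Real.pi * A) := by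
    rw [← ENNReal.ofReal_mul (by linarith)]
    congr 1
    field_simp
  rw [this, ← mul_assoc, ← h1, one_mul]

lemma aux_cone_frontier (a b : NNReal) (hb : 0 < b) :
    ((gaussianReal 0 a).prod (gaussianReal 0 b)) {z | |z.2| = z.1} = 0 := by
  have hm : MeasurableSet {z : ℝ × ℝ | |z.2| = z.1} :=
    (isClosed_eq (by fun_prop) (by fun_prop)).measurableSet
  rw [Measure.measure_prod_null hm]
  refine Eventually.of_forall fun x => ?_
  have := nullSingletonClass_gaussianReal (μ := 0) hb.ne'
  refine measure_mono_null (t := {x, -x}) ?_ (Set.Finite.measure_zero (by simp) _)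
  intro y hy
  have hy' : |y| = x := hy
  rcases abs_choice y with h | h
  · left; linarith
  · right
    simp only [Set.mem_singleton_iff]; linarith

lemma aux_half (a : NNReal) (ha : 0 < a) :
    gaussianReal 0 a (Set.Ici 0) = ENNReal.ofReal (1 / 2) := by
  have := nullSingletonClass_gaussianReal (μ := 0) ha.ne'
  have h1 : gaussianReal 0 a (Set.Iic 0) = gaussianReal 0 a (Set.Ici 0) := by
    conv_rhs => rw [← neg_zero, ← gaussianReal_map_neg (μ := 0) (v := a)]
    rw [Measure.map_apply (by fun_prop) measurableSet_Ici]
    congr 1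
    ext x
    simp
  have h2 : gaussianReal 0 a (Set.Iio 0) = gaussianReal 0 a (Set.Ici 0) := by
    rw [← h1]; exact measure_congr Iio_ae_eq_Iic
  have h3 := prob_compl_eq_one_sub (μ := gaussianReal 0 a) (measurableSet_Ici (a := (0 : ℝ)))
  have h4 := prob_add_prob_compl (μ := gaussianReal 0 a) (measurableSet_Ici (a := (0 : ℝ)))
  rw [Set.compl_Ici, h2, ← two_mul] at h4
  have : ENNReal.ofReal (1 / 2) = 2⁻¹ := by
    rw [one_div, ENNReal.ofReal_inv_of_pos (by norm_num)]; simp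
  rw [this]
  exact ENNReal.eq_inv_of_mul_eq_one_left (by rw [mul_comm]; exact h4)

lemma aux_row_map_cf (n : ℕ) (p : ℝ) (hp : 0 < p) (hp1 : p < 1) (x y : Fin n → ℝ)
    (t : WithLp 2 (ℝ × ℝ)) :
    charFun ((Measure.pi fun _ : Fin n => bernoulliM p).map
      (fun A => WithLp.toLp 2 ((∑ w, x w * (if A w then 1 else 0) : ℝ),
        (∑ w, y w * (if A w then 1 else 0) : ℝ)))) t
    = ∏ w, (((1 - p : ℝ) : ℂ) + (p : ℂ) *
        Complex.exp (((t.fst * x w + t.snd * y w : ℝ) : ℂ) * Complex.I)) := by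
  rw [charFun_apply, integral_map (Measurable.of_discrete).aemeasurable (by fun_prop),
    ← aux_row_cf n p hp hp1]
  congr 1
  ext A
  congr 2
  simp only [WithLp.prod_inner_apply]
  norm_cast
  simp only [add_mul, Finset.sum_add_distrib, RCLike.inner_apply, conj_trivial, Finset.mul_sum]
  congr 1 <;> exact Finset.sum_congr rfl fun w _ => by
    simp only [WithLp.ofLp_fst, WithLp.ofLp_snd]; ring

lemma aux_core2 (n : ℕ → ℕ) (p : ℕ → ℝ) (hp : ∀ k, 0 < p k) (hp1 : ∀ k, p k < 1)
    (hinf : Tendsto (fun k => (n k : ℝ) * p k * (1 - p k)) atTop atTop)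
    (g g' : ∀ k, Fin (n k) → ℝ) (hK : ∀ k w, |g k w| ≤ 1) (hK' : ∀ k w, |g' k w| ≤ 1)
    (hB : ∀ k, |∑ w, g k w| ≤ 2) (hB' : ∀ k, |∑ w, g' k w| ≤ 2)
    (β : ℝ) (hβ0 : 0 < β) (hβ1 : β < 1)
    (hv : Tendsto (fun k => (∑ w, g k w ^ 2) / (n k : ℝ)) atTop (𝓝 1))
    (hv' : Tendsto (fun k => (∑ w, g' k w ^ 2) / (n k : ℝ)) atTop (𝓝 1))
    (hc : Tendsto (fun k => (∑ w, g k w * g' k w) / (n k : ℝ)) atTop (𝓝 (2 * β - 1))) :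
    Tendsto (fun k => (Measure.pi fun _ : Fin (n k) => bernoulliM (p k))
      {A | 0 ≤ ∑ w, g k w * (if A w then 1 else 0) ∧ 0 ≤ ∑ w, g' k w * (if A w then 1 else 0)})
      atTop (𝓝 (ENNReal.ofReal (1 / Real.pi * Real.arctan (√(β / (1 - β)))))) := by
  have hfact : ∀ k, Fact (0 < p k ∧ p k < 1) := fun k => ⟨hp k, hp1 k⟩
  set τ : ℕ → ℝ := fun k => √((n k : ℝ) * p k * (1 - p k)) with hτ
  have hτinf : Tendsto τ atTop atTop := Real.tendsto_sqrt_atTop.comp hinf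
  have hpos : ∀ᶠ k in atTop, 0 < τ k := hτinf.eventually_gt_atTop 0
  let Y : ∀ k, (Fin (n k) → Bool) → WithLp 2 (ℝ × ℝ) := fun k A =>
    WithLp.toLp 2 ((∑ w, ((g k w + g' k w) / 2 / τ k) * (if A w then 1 else 0) : ℝ),
        (∑ w, ((g k w - g' k w) / 2 / τ k) * (if A w then 1 else 0) : ℝ))
  have hYm : ∀ k, Measurable (Y k) := fun k => Measurable.of_discrete
  let μ : ℕ → ProbabilityMeasure (WithLp 2 (ℝ × ℝ)) := fun k =>
    ⟨(Measure.pi fun _ : Fin (n k) => bernoulliM (p k)).map (Y k),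
      Measure.isProbabilityMeasure_map (hYm k).aemeasurable⟩
  let a : NNReal := ⟨β, hβ0.le⟩
  let b : NNReal := ⟨1 - β, by linarith⟩
  have ha : 0 < a := hβ0
  have hb : 0 < b := by change (0 : ℝ) < 1 - β; linarith
  have hLm : Measurable (WithLp.toLp 2 : ℝ × ℝ → WithLp 2 (ℝ × ℝ)) := by fun_prop
  let μ₀ : ProbabilityMeasure (WithLp 2 (ℝ × ℝ)) :=
    ⟨((gaussianReal 0 a).prod (gaussianReal 0 b)).map (WithLp.toLp 2),
      Measure.isProbabilityMeasure_map hLm.aemeasurable⟩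
  have hconv : Tendsto μ atTop (𝓝 μ₀) := by
    refine ProbabilityMeasure.tendsto_iff_tendsto_charFun.2 fun t => ?_
    have e0 : charFun (μ₀ : Measure (WithLp 2 (ℝ × ℝ))) t
        = Complex.exp ((-((t.fst ^ 2 * β + t.snd ^ 2 * (1 - β)) / 2) : ℝ) : ℂ) := by
      change charFun (((gaussianReal 0 a).prod (gaussianReal 0 b)).map (WithLp.toLp 2)) t = _
      rw [charFun_prod, charFun_gaussianReal, charFun_gaussianReal, ← Complex.exp_add]
      congr 1
      have ea : ((a : ℝ) : ℂ) = (β : ℂ) := rfl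
      have eb : ((b : ℝ) : ℂ) = ((1 - β : ℝ) : ℂ) := rfl
      rw [ea, eb]
      push_cast
      simp only [WithLp.ofLp_fst, WithLp.ofLp_snd]
      ring
    rw [e0]
    have e1 : ∀ k, charFun (μ k : Measure (WithLp 2 (ℝ × ℝ))) t
        = ∏ w, (((1 - p k : ℝ) : ℂ) + (p k : ℂ) *
      Complex.exp ((((t.fst * ((g k w + g' k w) / 2) + t.snd * ((g k w - g' k w) / 2))
        / √((n k : ℝ) * p k * (1 - p k)) : ℝ) : ℂ) * Complex.I)) := by
      intro k
      refine (aux_row_map_cf (n k) (p k) (hp k) (hp1 k) _ _ t).trans ?_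
      refine Finset.prod_congr rfl fun w _ => ?_
      congr 5
      rw [hτ]
      ring
    simp_rw [e1]
    refine aux_cf_tendsto n p hp hp1 hinf (fun k w => t.fst * ((g k w + g' k w) / 2)
      + t.snd * ((g k w - g' k w) / 2)) (|t.fst| + |t.snd|) (|t.fst| * 2 + |t.snd| * 2) _ ?_ ?_ ?_
    · intro k w
      have h1 := abs_le.1 (hK k w)
      have h2 := abs_le.1 (hK' k w)
      refine (abs_add_le _ _).trans (add_le_add ?_ ?_)
      · rw [abs_mul]
        exact mul_le_of_le_one_right (abs_nonneg _) (abs_le.2 ⟨by linarith, by linarith⟩)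
      · rw [abs_mul]
        exact mul_le_of_le_one_right (abs_nonneg _) (abs_le.2 ⟨by linarith, by linarith⟩)
    · intro k
      have h1 := abs_le.1 (hB k)
      have h2 := abs_le.1 (hB' k)
      rw [Finset.sum_add_distrib, ← Finset.mul_sum, ← Finset.mul_sum, ← Finset.sum_div,
        ← Finset.sum_div, Finset.sum_add_distrib, Finset.sum_sub_distrib]
      refine (abs_add_le _ _).trans (add_le_add ?_ ?_)
      · rw [abs_mul]
        exact mul_le_mul_of_nonneg_left (abs_le.2 ⟨by linarith, by linarith⟩) (abs_nonneg _)
      · rw [abs_mul]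
        exact mul_le_mul_of_nonneg_left (abs_le.2 ⟨by linarith, by linarith⟩) (abs_nonneg _)
    · have hl := ((hv.const_mul (((t.fst + t.snd) / 2) ^ 2)).add
        (hv'.const_mul (((t.fst - t.snd) / 2) ^ 2))).add
        (hc.const_mul ((t.fst + t.snd) * (t.fst - t.snd) / 2))
      have e2 : ((t.fst + t.snd) / 2) ^ 2 * 1 + ((t.fst - t.snd) / 2) ^ 2 * 1
        + (t.fst + t.snd) * (t.fst - t.snd) / 2 * (2 * β - 1)
        = t.fst ^ 2 * β + t.snd ^ 2 * (1 - β) := by ring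
      rw [e2] at hl
      refine hl.congr fun k => ?_
      rw [← mul_div_assoc, ← mul_div_assoc, ← mul_div_assoc, ← add_div, ← add_div]
      congr 1
      rw [Finset.mul_sum, Finset.mul_sum, Finset.mul_sum, ← Finset.sum_add_distrib,
        ← Finset.sum_add_distrib]
      exact Finset.sum_congr rfl fun w _ => by ring
  have hSc : IsClosed {z : WithLp 2 (ℝ × ℝ) | |z.snd| ≤ z.fst} :=
    isClosed_le (by fun_prop) (by fun_prop)
  have hfr : (μ₀ : Measure (WithLp 2 (ℝ × ℝ))) (frontier {z | |z.snd| ≤ z.fst}) = 0 := by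
    refine measure_mono_null (t := {z : WithLp 2 (ℝ × ℝ) | |z.snd| = z.fst}) ?_ ?_
    · exact frontier_le_subset_eq (by fun_prop) (by fun_prop)
    · change ((gaussianReal 0 a).prod (gaussianReal 0 b)).map (WithLp.toLp 2) _ = 0
      rw [Measure.map_apply hLm (isClosed_eq (by fun_prop) (by fun_prop)).measurableSet]
      exact aux_cone_frontier a b hb
  have key := ProbabilityMeasure.tendsto_measure_of_null_frontier_of_tendsto' hconv hfr
  have e0 : (μ₀ : Measure (WithLp 2 (ℝ × ℝ))) {z | |z.snd| ≤ z.fst}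
      = ENNReal.ofReal (1 / Real.pi * Real.arctan (√(β / (1 - β)))) := by
    change ((gaussianReal 0 a).prod (gaussianReal 0 b)).map (WithLp.toLp 2) _ = _
    rw [Measure.map_apply hLm hSc.measurableSet]
    exact aux_cone a b ha hb
  rw [e0] at key
  refine key.congr' ?_
  filter_upwards [hpos] with k hk
  change (Measure.pi fun _ : Fin (n k) => bernoulliM (p k)).map (Y k) _ = _
  rw [Measure.map_apply (hYm k) hSc.measurableSet]
  congr 1
  ext A
  have hx : ∀ s : ℝ, ∑ w, ((g k w + s * g' k w) / 2 / τ k) * (if A w then (1 : ℝ) else 0)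
    = (∑ w, g k w * (if A w then 1 else 0) + s * ∑ w, g' k w * (if A w then 1 else 0))
      / (2 * τ k) := by
    intro s
    rw [Finset.mul_sum, ← Finset.sum_add_distrib, Finset.sum_div]
    refine Finset.sum_congr rfl fun w _ => ?_
    field_simp
  have hx1 := hx 1
  have hx2 := hx (-1)
  simp only [one_mul, neg_mul, ← sub_eq_add_neg] at hx1 hx2
  have hY1 : (Y k A).fst = _ := hx1
  have hY2 : (Y k A).snd = _ := hx2
  simp only [Set.mem_preimage, Set.mem_ofPred_eq]
  rw [hY1, hY2, abs_div, abs_of_pos (show 0 < 2 * τ k by positivity),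
    div_le_div_iff_of_pos_right (by positivity), abs_le]
  constructor
  · rintro ⟨h1, h2⟩
    constructor <;> linarith
  · rintro ⟨h1, h2⟩
    constructor <;> linarith

lemma aux_core1 (n : ℕ → ℕ) (p : ℕ → ℝ) (hp : ∀ k, 0 < p k) (hp1 : ∀ k, p k < 1)
    (hinf : Tendsto (fun k => (n k : ℝ) * p k * (1 - p k)) atTop atTop)
    (g : ∀ k, Fin (n k) → ℝ) (hK : ∀ k w, |g k w| ≤ 1)
    (hB : ∀ k, |∑ w, g k w| ≤ 2)
    (hv : Tendsto (fun k => (∑ w, g k w ^ 2) / (n k : ℝ)) atTop (𝓝 1)) :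
    Tendsto (fun k => (Measure.pi fun _ : Fin (n k) => bernoulliM (p k))
      {A | 0 ≤ ∑ w, g k w * (if A w then 1 else 0)})
      atTop (𝓝 (ENNReal.ofReal (1 / 2))) := by
  have hfact : ∀ k, Fact (0 < p k ∧ p k < 1) := fun k => ⟨hp k, hp1 k⟩
  set τ : ℕ → ℝ := fun k => √((n k : ℝ) * p k * (1 - p k)) with hτ
  have hτinf : Tendsto τ atTop atTop := Real.tendsto_sqrt_atTop.comp hinf
  have hpos : ∀ᶠ k in atTop, 0 < τ k := hτinf.eventually_gt_atTop 0
  let Y : ∀ k, (Fin (n k) → Bool) → ℝ := fun k A =>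
    ∑ w, (g k w / τ k) * (if A w then 1 else 0)
  have hYm : ∀ k, Measurable (Y k) := fun k => Measurable.of_discrete
  let μ : ℕ → ProbabilityMeasure ℝ := fun k =>
    ⟨(Measure.pi fun _ : Fin (n k) => bernoulliM (p k)).map (Y k),
      Measure.isProbabilityMeasure_map (hYm k).aemeasurable⟩
  let μ₀ : ProbabilityMeasure ℝ := ⟨gaussianReal 0 1, inferInstance⟩
  have hconv : Tendsto μ atTop (𝓝 μ₀) := by
    refine ProbabilityMeasure.tendsto_iff_tendsto_charFun.2 fun t => ?_
    have e0 : charFun (μ₀ : Measure ℝ) t = Complex.exp ((-(t ^ 2 / 2) : ℝ) : ℂ) := by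
      change charFun (gaussianReal 0 1) t = _
      rw [charFun_gaussianReal]
      congr 1
      push_cast
      ring
    rw [e0]
    have e1 : ∀ k, charFun (μ k : Measure ℝ) t
        = ∏ w, (((1 - p k : ℝ) : ℂ) + (p k : ℂ) *
      Complex.exp (((t * g k w / √((n k : ℝ) * p k * (1 - p k)) : ℝ) : ℂ) * Complex.I)) := by
      intro k
      change charFun ((Measure.pi fun _ : Fin (n k) => bernoulliM (p k)).map (Y k)) t = _
      rw [charFun_apply_real, integral_map (hYm k).aemeasurable (by fun_prop),
        ← aux_row_cf (n k) (p k) (hp k) (hp1 k)]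
      congr 1
      ext A
      congr 2
      simp only [Y]
      norm_cast
      rw [Finset.mul_sum]
      exact Finset.sum_congr rfl fun w _ => by rw [hτ]; ring
    simp_rw [e1]
    refine aux_cf_tendsto n p hp hp1 hinf (fun k w => t * g k w) (|t|) (|t| * 2) _ ?_ ?_ ?_
    · intro k w
      rw [abs_mul]
      exact mul_le_of_le_one_right (abs_nonneg _) (hK k w)
    · intro k
      rw [← Finset.mul_sum, abs_mul]
      exact mul_le_mul_of_nonneg_left (hB k) (abs_nonneg _)
    · have hl := hv.const_mul (t ^ 2)
      rw [mul_one] at hl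
      refine hl.congr fun k => ?_
      rw [← mul_div_assoc, Finset.mul_sum]
      congr 1
      exact Finset.sum_congr rfl fun w _ => by ring
  have hfr : (μ₀ : Measure ℝ) (frontier (Set.Ici 0)) = 0 := by
    rw [frontier_Ici]
    have := nullSingletonClass_gaussianReal (μ := 0) (v := 1) one_ne_zero
    exact measure_singleton (μ := gaussianReal 0 1) 0
  have key := ProbabilityMeasure.tendsto_measure_of_null_frontier_of_tendsto' hconv hfr
  have e0 : (μ₀ : Measure ℝ) (Set.Ici 0) = ENNReal.ofReal (1 / 2) := aux_half 1 one_pos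
  rw [e0] at key
  refine key.congr' ?_
  filter_upwards [hpos] with k hk
  change (Measure.pi fun _ : Fin (n k) => bernoulliM (p k)).map (Y k) _ = _
  rw [Measure.map_apply (hYm k) measurableSet_Ici]
  congr 1
  ext A
  have hx : Y k A = (∑ w, g k w * (if A w then 1 else 0)) / τ k := by
    simp only [Y]
    rw [Finset.sum_div]
    exact Finset.sum_congr rfl fun w _ => by ring
  simp only [Set.mem_preimage, Set.mem_ofPred_eq, Set.mem_Ici]
  rw [hx]
  constructor
  · intro h
    by_contra hcon
    push Not at hcon
    exact absurd (div_neg_of_neg_of_pos hcon hk) (not_lt.2 h)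
  · intro h
    positivity

/-- Signed contribution of the potential arc `v → w` to the number of out-neighbours of the other
colour minus the number of out-neighbours of the same colour. -/
noncomputable def auxSg {n : ℕ} (c : Fin n → Bool) (v w : Fin n) : ℝ :=
  if w = v then 0 else if c w = c v then -1 else 1

lemma auxSg_abs {n : ℕ} (c : Fin n → Bool) (v w : Fin n) : |auxSg c v w| ≤ 1 := by
  unfold auxSg; split_ifs <;> simp

lemma auxSg_majority {n : ℕ} (A : Fin n → Fin n → Bool) (c : Fin n → Bool) (v : Fin n) :
    MajorityAt A c v ↔ 0 ≤ ∑ w, auxSg c v w * (if A v w then 1 else 0) := by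
  classical
  have h1 : (({w | DiAdj A v w ∧ c w = c v} : Set (Fin n)).ncard : ℝ)
      = ∑ w, if DiAdj A v w ∧ c w = c v then (1 : ℝ) else 0 := by
    rw [Set.ncard_eq_toFinset_card', Finset.sum_boole]
    congr 2
    ext w; simp
  have h2 : (({w | DiAdj A v w} : Set (Fin n)).ncard : ℝ)
      = ∑ w, if DiAdj A v w then (1 : ℝ) else 0 := by
    rw [Set.ncard_eq_toFinset_card', Finset.sum_boole]
    congr 2
    ext w; simp
  have h3 : ∑ w, auxSg c v w * (if A v w then 1 else 0)
      = (({w | DiAdj A v w} : Set (Fin n)).ncard : ℝ)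
        - 2 * (({w | DiAdj A v w ∧ c w = c v} : Set (Fin n)).ncard : ℝ) := by
    rw [h1, h2, Finset.mul_sum, ← Finset.sum_sub_distrib]
    refine Finset.sum_congr rfl fun w _ => ?_
    unfold auxSg DiAdj
    by_cases hw : w = v
    · simp [hw]
    · have hw' : v ≠ w := fun h => hw h.symm
      by_cases hA : A v w = true <;> by_cases hcw : c w = c v <;> simp [hw, hw', hA, hcw]
      norm_num
  rw [h3, sub_nonneg]
  unfold MajorityAt
  exact_mod_cast Iff.rfl

lemma auxSg_sum {n : ℕ} (c : Fin n → Bool) (v : Fin n) (hc : IsBisection c) :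
    |∑ w, auxSg c v w| ≤ 2 := by
  classical
  have h1 : ∀ b : Bool, ((({w | c w = b} : Set (Fin n)).ncard : ℤ) : ℝ)
      = ∑ w, if c w = b then (1 : ℝ) else 0 := by
    intro b
    rw [Set.ncard_eq_toFinset_card', Finset.sum_boole]
    simp
  have h2 : |(∑ w, if c w = true then (1 : ℝ) else 0) - ∑ w, if c w = false then (1 : ℝ) else 0| ≤ 1 := by
    have hc' : |(({w | c w = true} : Set (Fin n)).ncard : ℤ) -
        (({w | c w = false} : Set (Fin n)).ncard : ℤ)| ≤ 1 := hc
    rw [← h1, ← h1, ← Int.cast_sub, ← Int.cast_abs]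
    have h := (Int.cast_le (R := ℝ)).2 hc'
    rwa [Int.cast_one] at h
  have h3 : ∑ w, auxSg c v w = (∑ w, if c w = c v then (-1 : ℝ) else 1) + 1 := by
    have : ∀ w, auxSg c v w = (if c w = c v then (-1 : ℝ) else 1) + if w = v then 1 else 0 := by
      intro w
      unfold auxSg
      by_cases hw : w = v
      · simp [hw]
      · simp [hw]
    simp_rw [this, Finset.sum_add_distrib]
    simp
  have h4 : |∑ w, if c w = c v then (-1 : ℝ) else 1| ≤ 1 := by
    rw [← Finset.sum_sub_distrib] at h2
    cases hv : c v
    · convert h2 using 3 with w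
      cases c w <;> simp
    · rw [← abs_neg, ← Finset.sum_neg_distrib]
      convert h2 using 3 with w
      cases c w <;> simp
  rw [h3]
  refine (abs_add_le _ _).trans ?_
  rw [abs_one]
  linarith

lemma auxSg_sq {n : ℕ} (c : Fin n → Bool) (v : Fin n) :
    ∑ w, auxSg c v w ^ 2 = n - 1 := by
  have : ∀ w, auxSg c v w ^ 2 = 1 - if w = v then 1 else 0 := by
    intro w
    unfold auxSg
    split_ifs <;> simp
  simp_rw [this, Finset.sum_sub_distrib]
  simp

/-- The fraction of vertices on which the two sign patterns (relative to `v`) agree. -/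
noncomputable def auxBeta {n : ℕ} (c c' : Fin n → Bool) (v : Fin n) : ℝ :=
  if c v = c' v then overlap c c' else 1 - overlap c c'

lemma auxSg_mul {n : ℕ} (c c' : Fin n → Bool) (v : Fin n) (hn : (n : ℝ) ≠ 0) :
    ∑ w, auxSg c v w * auxSg c' v w = n * (2 * auxBeta c c' v - 1) - 1 := by
  classical
  have h1 : (n : ℝ) * overlap c c' = ∑ w, if c w = c' w then (1 : ℝ) else 0 := by
    unfold overlap
    rw [mul_div_cancel₀ _ hn, Set.ncard_eq_toFinset_card', Finset.sum_boole]
    congr 2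
    ext w; simp
  have hcard : ∑ w : Fin n, (1 : ℝ) = n := by simp
  have hv1 : ∑ w : Fin n, (if w = v then (1 : ℝ) else 0) = 1 := by simp
  unfold auxBeta
  by_cases hcv : c v = c' v
  · rw [if_pos hcv]
    have : (n : ℝ) * (2 * overlap c c' - 1) - 1 = ∑ w : Fin n,
      (2 * (if c w = c' w then (1 : ℝ) else 0) - 1 - if w = v then 1 else 0) := by
      rw [Finset.sum_sub_distrib, Finset.sum_sub_distrib, ← Finset.mul_sum, ← h1, hcard, hv1]
      ring
    rw [this]
    refine Finset.sum_congr rfl fun w _ => ?_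
    unfold auxSg
    by_cases hw : w = v
    · subst hw; simp [hcv]; norm_num
    · simp only [hw, if_false]
      cases h1 : c w <;> cases h2 : c v <;> cases h3 : c' w <;> cases h4 : c' v <;>
        simp_all <;> norm_num
  · rw [if_neg hcv]
    have : (n : ℝ) * (2 * (1 - overlap c c') - 1) - 1 = ∑ w : Fin n,
      (1 - 2 * (if c w = c' w then (1 : ℝ) else 0) - if w = v then 1 else 0) := by
      rw [Finset.sum_sub_distrib, Finset.sum_sub_distrib, ← Finset.mul_sum, ← h1, hcard, hv1]
      ring
    rw [this]
    refine Finset.sum_congr rfl fun w _ => ?_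
    unfold auxSg
    by_cases hw : w = v
    · subst hw; simp [hcv]
    · simp only [hw, if_false]
      cases h1 : c w <;> cases h2 : c v <;> cases h3 : c' w <;> cases h4 : c' v <;>
        simp_all <;> norm_num

lemma aux_diMeasure (n : ℕ) (p : ℝ) (hp : 0 < p) (hp1 : p < 1) (v : Fin n)
    (S : Set (Fin n → Bool)) :
    diMeasure n p {A | A v ∈ S} = (Measure.pi fun _ : Fin n => bernoulliM p) S := by
  have : Fact (0 < p ∧ p < 1) := ⟨hp, hp1⟩
  have h := measurePreserving_eval (fun _ : Fin n => Measure.pi fun _ : Fin n => bernoulliM p) v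
  exact h.measure_preimage (MeasurableSet.of_discrete).nullMeasurableSet

lemma aux_unified (ε : ℝ) (hε : 0 < ε) (δ : ℝ) (hδ : 0 < δ) :
    ∃ M : ℝ, ∀ (n : ℕ) (p : ℝ), 0 < p → p < 1 → M ≤ (n : ℝ) * p * (1 - p) →
      ∀ c c' : Fin n → Bool, IsBisection c → IsBisection c' →
        ε ≤ overlap c c' → overlap c c' ≤ 1 - ε →
        ∀ v : Fin n,
          |(diMeasure n p {A | MajorityAt A c v}).toReal - 1 / 2| ≤ δ ∧
            |(diMeasure n p {A | MajorityAt A c v ∧ MajorityAt A c' v}).toReal -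
              (1 / Real.pi) *
                Real.arctan (Real.sqrt (auxBeta c c' v / (1 - auxBeta c c' v)))| ≤ δ := by
  by_contra hcon
  have H : ∀ k : ℕ, ∃ (n : ℕ) (p : ℝ) (c c' : Fin n → Bool) (v : Fin n), 0 < p ∧ p < 1 ∧
      (k : ℝ) ≤ (n : ℝ) * p * (1 - p) ∧ IsBisection c ∧ IsBisection c' ∧
        ε ≤ overlap c c' ∧ overlap c c' ≤ 1 - ε ∧
        ¬ (|(diMeasure n p {A | MajorityAt A c v}).toReal - 1 / 2| ≤ δ ∧
            |(diMeasure n p {A | MajorityAt A c v ∧ MajorityAt A c' v}).toReal -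
              (1 / Real.pi) *
                Real.arctan (Real.sqrt (auxBeta c c' v / (1 - auxBeta c c' v)))| ≤ δ) := by
    intro k
    by_contra hk
    apply hcon
    refine ⟨k, fun n p h1 h2 h3 c c' h4 h5 h6 h7 v => ?_⟩
    by_contra h8
    exact hk ⟨n, p, c, c', v, h1, h2, h3, h4, h5, h6, h7, h8⟩
  choose n p c c' v hp hp1 hM hb hb' ho ho' hviol using H
  have hβ : ∀ k, auxBeta (c k) (c' k) (v k) ∈ Set.Icc ε (1 - ε) := by
    intro k
    unfold auxBeta
    have h1 := ho k
    have h2 := ho' k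
    split_ifs
    · exact ⟨h1, h2⟩
    · constructor <;> linarith
  obtain ⟨β, hβm, φ, hφ, hlim⟩ := isCompact_Icc.tendsto_subseq hβ
  have hβ0 : 0 < β := lt_of_lt_of_le hε hβm.1
  have hβ1 : β < 1 := by linarith [hβm.2]
  have hinf : Tendsto (fun k => (n (φ k) : ℝ) * p (φ k) * (1 - p (φ k))) atTop atTop := by
    refine tendsto_atTop_mono (f := fun k => ((φ k : ℕ) : ℝ)) (fun k => hM (φ k)) ?_
    exact tendsto_natCast_atTop_atTop.comp hφ.tendsto_atTop
  have hninf : Tendsto (fun k => (n (φ k) : ℝ)) atTop atTop := by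
    refine tendsto_atTop_mono (fun k => ?_) hinf
    have h1 := hp (φ k)
    have h2 := hp1 (φ k)
    rw [mul_assoc]
    exact mul_le_of_le_one_right (by positivity) (by nlinarith)
  have hn0 : ∀ᶠ k in atTop, (n (φ k) : ℝ) ≠ 0 :=
    (hninf.eventually_gt_atTop 0).mono fun k hk => hk.ne'
  have hninv : Tendsto (fun k => 1 / (n (φ k) : ℝ)) atTop (𝓝 0) := hninf.const_div_atTop 1
  have hv : ∀ d : ∀ k, Fin (n k) → Bool,
      Tendsto (fun k => (∑ w, auxSg (d (φ k)) (v (φ k)) w ^ 2) / (n (φ k) : ℝ)) atTop (𝓝 1) := by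
    intro d
    have : Tendsto (fun k => 1 - 1 / (n (φ k) : ℝ)) atTop (𝓝 1) := by
      simpa using hninv.const_sub 1
    refine this.congr' ?_
    filter_upwards [hn0] with k hk
    rw [auxSg_sq]
    field_simp
  have hcv : Tendsto (fun k => (∑ w, auxSg (c (φ k)) (v (φ k)) w * auxSg (c' (φ k)) (v (φ k)) w)
      / (n (φ k) : ℝ)) atTop (𝓝 (2 * β - 1)) := by
    have : Tendsto (fun k => (2 * auxBeta (c (φ k)) (c' (φ k)) (v (φ k)) - 1) - 1 / (n (φ k) : ℝ))
        atTop (𝓝 ((2 * β - 1) - 0)) := ((hlim.const_mul 2).sub_const 1).sub hninv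
    rw [sub_zero] at this
    refine this.congr' ?_
    filter_upwards [hn0] with k hk
    rw [auxSg_mul _ _ _ hk]
    field_simp
  have t1 := aux_core1 (fun k => n (φ k)) (fun k => p (φ k)) (fun k => hp _) (fun k => hp1 _) hinf
    (fun k w => auxSg (c (φ k)) (v (φ k)) w) (fun k w => auxSg_abs _ _ _)
    (fun k => auxSg_sum _ _ (hb _)) (hv c)
  have t2 := aux_core2 (fun k => n (φ k)) (fun k => p (φ k)) (fun k => hp _) (fun k => hp1 _) hinf
    (fun k w => auxSg (c (φ k)) (v (φ k)) w) (fun k w => auxSg (c' (φ k)) (v (φ k)) w)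
    (fun k w => auxSg_abs _ _ _) (fun k w => auxSg_abs _ _ _)
    (fun k => auxSg_sum _ _ (hb _)) (fun k => auxSg_sum _ _ (hb' _)) β hβ0 hβ1 (hv c) (hv c') hcv
  have e1 : ∀ k, diMeasure (n k) (p k) {A | MajorityAt A (c k) (v k)}
      = (Measure.pi fun _ : Fin (n k) => bernoulliM (p k))
        {A | 0 ≤ ∑ w, auxSg (c k) (v k) w * (if A w then 1 else 0)} := by
    intro k
    rw [← aux_diMeasure (n k) (p k) (hp k) (hp1 k) (v k)]
    congr 1
    ext A
    exact auxSg_majority A (c k) (v k)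
  have e2 : ∀ k, diMeasure (n k) (p k) {A | MajorityAt A (c k) (v k) ∧ MajorityAt A (c' k) (v k)}
      = (Measure.pi fun _ : Fin (n k) => bernoulliM (p k))
        {A | 0 ≤ ∑ w, auxSg (c k) (v k) w * (if A w then 1 else 0) ∧
          0 ≤ ∑ w, auxSg (c' k) (v k) w * (if A w then 1 else 0)} := by
    intro k
    rw [← aux_diMeasure (n k) (p k) (hp k) (hp1 k) (v k)]
    congr 1
    ext A
    exact and_congr (auxSg_majority A (c k) (v k)) (auxSg_majority A (c' k) (v k))
  have r1 := (ENNReal.tendsto_toReal ENNReal.ofReal_ne_top).comp t1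
  have r2 := (ENNReal.tendsto_toReal ENNReal.ofReal_ne_top).comp t2
  rw [ENNReal.toReal_ofReal (by norm_num)] at r1
  have hnn : 0 ≤ 1 / Real.pi * Real.arctan (√(β / (1 - β))) := by
    have := Real.pi_pos
    have h : 0 ≤ Real.arctan (√(β / (1 - β))) := by
      rw [← Real.arctan_zero]; exact Real.arctan_mono (Real.sqrt_nonneg _)
    positivity
  rw [ENNReal.toReal_ofReal hnn] at r2
  have r3 : Tendsto (fun k => 1 / Real.pi * Real.arctan (√(auxBeta (c (φ k)) (c' (φ k)) (v (φ k)) /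
      (1 - auxBeta (c (φ k)) (c' (φ k)) (v (φ k)))))) atTop
      (𝓝 (1 / Real.pi * Real.arctan (√(β / (1 - β))))) := by
    have hd : Tendsto (fun k => auxBeta (c (φ k)) (c' (φ k)) (v (φ k)) /
      (1 - auxBeta (c (φ k)) (c' (φ k)) (v (φ k)))) atTop (𝓝 (β / (1 - β))) :=
      hlim.div (hlim.const_sub 1) (by linarith)
    exact (((Real.continuous_arctan.comp Real.continuous_sqrt).tendsto _).comp hd).const_mul _
  have s1 := (r1.sub_const (1 / 2)).abs
  have s2 := (r2.sub r3).abs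
  rw [sub_self, abs_zero] at s1 s2
  obtain ⟨k, hk1, hk2⟩ := ((s1.eventually_le_const hδ).and (s2.eventually_le_const hδ)).exists
  refine hviol (φ k) ⟨?_, ?_⟩
  · rw [e1]; exact hk1
  · rw [e2]; exact hk2

/-- Gaussian approximation for majority events: fix `ε > 0`. For every `δ > 0` there is
`M` such that whenever `n·p·(1−p) ≥ M`, for any pair of bisections `c, c'` with overlap
`α ∈ [ε, 1−ε]` and any vertex `v`, the probabilities of the events that `v` is
majority-coloured w.r.t. `c` (and w.r.t. both `c` and `c'`) are within `δ` of `1/2`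
(resp. the stated arctan expressions). -/
theorem majority_event_probabilities (ε : ℝ) (hε : 0 < ε) (δ : ℝ) (hδ : 0 < δ) :
    ∃ M : ℝ, ∀ (n : ℕ) (p : ℝ), 0 < p → p < 1 → M ≤ (n : ℝ) * p * (1 - p) →
      ∀ c c' : Fin n → Bool, IsBisection c → IsBisection c' →
        ε ≤ overlap c c' → overlap c c' ≤ 1 - ε →
        ∀ v : Fin n,
          |(diMeasure n p {A | MajorityAt A c v}).toReal - 1 / 2| ≤ δ ∧
          (c v = c' v →
            |(diMeasure n p {A | MajorityAt A c v ∧ MajorityAt A c' v}).toReal -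
              (1 / Real.pi) *
                Real.arctan (Real.sqrt (overlap c c' / (1 - overlap c c')))| ≤ δ) ∧
          (c v ≠ c' v →
            |(diMeasure n p {A | MajorityAt A c v ∧ MajorityAt A c' v}).toReal -
              (1 / Real.pi) *
                Real.arctan (Real.sqrt ((1 - overlap c c') / overlap c c'))| ≤ δ) := by
  obtain ⟨M, hM⟩ := aux_unified ε hε δ hδ
  refine ⟨M, fun n p hp hp1 hn c c' hb hb' ho ho' v => ?_⟩
  obtain ⟨h1, h2⟩ := hM n p hp hp1 hn c c' hb hb' ho ho' v
  refine ⟨h1, fun hv => ?_, fun hv => ?_⟩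
  · rw [auxBeta, if_pos hv] at h2
    exact h2
  · rw [auxBeta, if_neg hv, sub_sub_cancel] at h2
    exact h2
end

section
/- Let (p_n) be a sequence in [0,1] with n·p_n·(1−p_n) → ∞, let D ~ 𝔻(n, p_n), and let X_n be the number of majority bisections of D (i.e. bisections c : V(D) → {1,2} in which every vertex is majority-coloured). Then: (1) E[X_n] ≥ e^{−o(n)}, i.e. liminf_{n→∞} (1/n)·log E[X_n] ≥ 0; and (2) E[X_n²] ≤ e^{o(n)}, i.e. limsup_{n→∞} (1/n)·log E[X_n²] ≤ 0. -/
open MeasureTheory Filter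

/-- The number of majority bisections of the digraph encoded by `A`. -/
noncomputable def numMajBisections (n : ℕ) (A : Fin n → Fin n → Bool) : ℕ :=
  ({c : Fin n → Bool | IsBisection c ∧ ∀ v, MajorityAt A c v}).ncard


/-- The law of a single row. -/
noncomputable def rowM (n : ℕ) (p : ℝ) : Measure (Fin n → Bool) :=
  Measure.pi fun _ => bernoulliM p

def bitZ (b : Bool) : ℤ := if b then 1 else 0

def sgnZ (b : Bool) : ℤ := if b then 1 else -1

def rowS {n : ℕ} (s : Fin n → ℤ) (r : Fin n → Bool) : ℤ := ∑ j, s j * bitZ (r j)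

lemma bern_prob {p : ℝ} (hp : p ∈ Set.Icc (0 : ℝ) 1) : IsProbabilityMeasure (bernoulliM p) := by
  constructor
  have h1 : 0 ≤ 1 - p := by linarith [hp.2]
  simp only [bernoulliM, Measure.add_apply, Measure.smul_apply, measure_univ]
  rw [ENNReal.smul_def, ENNReal.smul_def, smul_eq_mul, smul_eq_mul, mul_one, mul_one,
    ← ENNReal.coe_add, ← Real.toNNReal_add hp.1 h1]
  simp

lemma row_prob {n : ℕ} {p : ℝ} (hp : p ∈ Set.Icc (0 : ℝ) 1) :
    IsProbabilityMeasure (rowM n p) := by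
  have := bern_prob hp
  unfold rowM; infer_instance

instance (n : ℕ) (p : ℝ) : IsFiniteMeasure (rowM n p) := by
  unfold rowM; infer_instance

instance (n : ℕ) (p : ℝ) : IsFiniteMeasure (diMeasure n p) := by
  unfold diMeasure; infer_instance

lemma di_eq (n : ℕ) (p : ℝ) : diMeasure n p = Measure.pi fun _ => rowM n p := rfl

/-- coordinates permutation invariance of the row law -/
lemma row_perm {n : ℕ} (p : ℝ) (e : Equiv.Perm (Fin n)) (P : (Fin n → Bool) → Prop) :
    (rowM n p).real {r | P (r ∘ e)} = (rowM n p).real {r | P r} := by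
  have h := measurePreserving_piCongrLeft (fun _ : Fin n => bernoulliM p) e
  have h2 := h.measureReal_preimage (s := {r | P (r ∘ e)}) 
    (MeasurableSet.of_discrete.nullMeasurableSet)
  have h3 : (MeasurableEquiv.piCongrLeft (fun _ : Fin n => Bool) e) ⁻¹' {r | P (r ∘ e)} =
     {r | P r} := by
    ext r
    simp only [Set.mem_preimage, Set.mem_ofPred_eq]
    have : ((MeasurableEquiv.piCongrLeft (fun _ : Fin n => Bool) e) r) ∘ e = r := by
      ext j
      simp [MeasurableEquiv.coe_piCongrLeft, Equiv.piCongrLeft_apply_apply]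
    rw [this]
  rw [h3] at h2
  exact h2.symm

lemma di_prod {n : ℕ} (p : ℝ) (P : Fin n → (Fin n → Bool) → Prop) :
    (diMeasure n p).real {A | ∀ v, P v (A v)} = ∏ v, (rowM n p).real {r | P v r} := by
  have : {A : Fin n → Fin n → Bool | ∀ v, P v (A v)} = Set.pi Set.univ (fun v => {r | P v r}) := by
    ext A; simp
  rw [this, di_eq, measureReal_def, Measure.pi_pi, ENNReal.toReal_prod]
  rfl

/-- the sign vector seen from `v` -/
def signAt {n : ℕ} (c : Fin n → Bool) (v : Fin n) (j : Fin n) : ℤ :=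
  if j = v then 0 else if c j = c v then 1 else -1

lemma majority_iff {n : ℕ} (A : Fin n → Fin n → Bool) (c : Fin n → Bool) (v : Fin n) :
    MajorityAt A c v ↔ rowS (signAt c v) (A v) ≤ 0 := by
  classical
  unfold MajorityAt DiAdj rowS
  rw [Set.ncard_eq_toFinset_card', Set.ncard_eq_toFinset_card', Set.toFinset_ofPred,
    Set.toFinset_ofPred, Finset.card_filter, Finset.card_filter, ← Int.ofNat_le, Int.natCast_mul,
    Nat.cast_sum, Nat.cast_sum, ← sub_nonpos, Finset.mul_sum, ← Finset.sum_sub_distrib]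
  refine iff_of_eq (congrArg (· ≤ 0) (Finset.sum_congr rfl fun j _ => ?_))
  unfold signAt bitZ
  by_cases h1 : j = v
  · subst h1; simp
  · have h1' : ¬ v = j := fun h => h1 h.symm
    by_cases h2 : c j = c v <;> cases h3 : A v j <;> simp [h1, h1', h2]

/-- including the diagonal entry costs at most one -/
lemma majority_imp {n : ℕ} (c : Fin n → Bool) (v : Fin n) (r : Fin n → Bool)
    (h : rowS (signAt c v) r ≤ 0) :
    sgnZ (c v) * rowS (fun j => sgnZ (c j)) r ≤ 1 := by
  classical
  have key : sgnZ (c v) * rowS (fun j => sgnZ (c j)) r ≤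
      rowS (signAt c v) r + ∑ j, (if j = v then 1 else 0) := by
    unfold rowS
    rw [Finset.mul_sum, ← Finset.sum_add_distrib]
    refine Finset.sum_le_sum fun j _ => ?_
    unfold signAt sgnZ bitZ
    beta_reduce
    by_cases h1 : j = v
    · subst h1
      cases c j <;> cases r j <;> simp
    · cases c j <;> cases c v <;> cases r j <;> simp [h1]
  simp at key
  linarith

/-- A vertex of a bisection is majority-coloured with probability at least one half. -/
lemma half_le {n : ℕ} {p : ℝ} (hp : p ∈ Set.Icc (0 : ℝ) 1) (c : Fin n → Bool)
    (hc : IsBisection c) (v : Fin n) :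
    1 / 2 ≤ (rowM n p).real {r | rowS (signAt c v) r ≤ 0} := by
  classical
  have := row_prob (n := n) hp
  obtain ⟨e, he⟩ : ∃ e : Equiv.Perm (Fin n), ∀ j, signAt c v j + signAt c v (e j) ≤ 0 := by
    let S : Finset (Fin n) := Finset.univ.filter fun j => c j = c v
    let T : Finset (Fin n) := Finset.univ.filter fun j => c j ≠ c v
    have hvS : v ∈ S := by simp [S]
    have hcard : (S.erase v).card ≤ T.card := by
      rw [Finset.card_erase_of_mem hvS]
      unfold IsBisection at hc
      rw [Set.ncard_eq_toFinset_card', Set.ncard_eq_toFinset_card', Set.toFinset_ofPred,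
        Set.toFinset_ofPred, abs_le] at hc
      cases hv : c v
      · have : T = Finset.univ.filter fun j => c j = true := by
          ext j; simp [T, hv]
        rw [this]; simp only [S, hv]; omega
      · have : T = Finset.univ.filter fun j => c j = false := by
          ext j; simp [T, hv]
        rw [this]; simp only [S, hv]; omega
    obtain ⟨T', hT', hTc⟩ := Finset.exists_subset_card_eq hcard
    have hvT : v ∉ T' := fun h => by simpa [T] using hT' h
    obtain ⟨g, hg⟩ : ∃ g : {x // x ∈ S} ≃ {x // x ∈ insert v T'}, g ⟨v, hvS⟩ = ⟨v, by simp⟩ := by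
      have hc : Fintype.card {x // x ∈ S} = Fintype.card {x // x ∈ insert v T'} := by
        rw [Fintype.card_coe, Fintype.card_coe, Finset.card_insert_of_notMem hvT, hTc]
        have := Finset.card_pos.2 ⟨v, hvS⟩
        rw [Finset.card_erase_of_mem hvS]; omega
      let g0 := Fintype.equivOfCardEq hc
      exact ⟨g0.trans (Equiv.swap (g0 ⟨v, hvS⟩) ⟨v, by simp⟩), by simp⟩
    refine ⟨g.extendSubtype, fun j => ?_⟩
    by_cases hj : j ∈ S
    · rw [Equiv.extendSubtype_apply_of_mem g j hj]
      by_cases hjv : j = v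
      · subst hjv; rw [hg]; simp [signAt]
      · have hne : (g ⟨j, hj⟩ : Fin n) ≠ v := by
          intro h
          have : g ⟨j, hj⟩ = g ⟨v, hvS⟩ := by rw [hg]; exact Subtype.ext h
          exact hjv (by simpa using this)
        have hm : (g ⟨j, hj⟩ : Fin n) ∈ T' := by
          have := (g ⟨j, hj⟩).2
          rw [Finset.mem_insert] at this
          exact this.resolve_left hne
        have hm' : c (g ⟨j, hj⟩) ≠ c v := by simpa [T] using hT' hm
        have hj' : c j = c v := by simpa [S] using hj
        simp [signAt, hjv, hne, hm', hj']
    · have hj' : c j ≠ c v := by simpa [S] using hj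
      have hjv : j ≠ v := fun h => hj' (by rw [h])
      have : signAt c v j = -1 := by simp [signAt, hjv, hj']
      rw [this]
      unfold signAt
      split_ifs <;> norm_num
  have h1 := row_perm p e (fun r => rowS (signAt c v) r ≤ 0)
  have hsum : ∀ r : Fin n → Bool, rowS (signAt c v) r + rowS (signAt c v) (r ∘ e) ≤ 0 := by
    intro r
    have : rowS (signAt c v) r = ∑ j, signAt c v (e j) * bitZ (r (e j)) :=
      (Equiv.sum_comp e (fun j => signAt c v j * bitZ (r j))).symm
    rw [this]
    unfold rowS
    rw [← Finset.sum_add_distrib]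
    refine Finset.sum_nonpos fun j _ => ?_
    have hb : 0 ≤ bitZ (r (e j)) := by unfold bitZ; split_ifs <;> norm_num
    have := mul_nonpos_of_nonpos_of_nonneg (he j) hb
    simp only [Function.comp]
    linarith
  have hu : (Set.univ : Set (Fin n → Bool)) ⊆
      {r | rowS (signAt c v) r ≤ 0} ∪ {r | rowS (signAt c v) (r ∘ e) ≤ 0} := by
    intro r _
    have := hsum r
    by_cases h : rowS (signAt c v) r ≤ 0
    · exact Or.inl h
    · right; simp only [Set.mem_ofPred_eq]; omega
  have h2 := measureReal_mono (μ := rowM n p) hu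
  have h3 := measureReal_union_le (μ := rowM n p) {r | rowS (signAt c v) r ≤ 0}
    {r | rowS (signAt c v) (r ∘ e) ≤ 0}
  rw [h1] at h3
  rw [probReal_univ] at h2
  linarith

lemma bern_integral {p : ℝ} (hp : p ∈ Set.Icc (0 : ℝ) 1) (f : Bool → ℂ) :
    ∫ b, f b ∂(bernoulliM p) = p * f true + (1 - p) * f false := by
  have h1 : 0 ≤ 1 - p := by linarith [hp.2]
  unfold bernoulliM
  rw [integral_add_measure (.of_finite) (.of_finite), integral_smul_nnreal_measure,
    integral_smul_nnreal_measure, integral_dirac, integral_dirac, NNReal.smul_def, NNReal.smul_def,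
    Real.coe_toNNReal _ hp.1, Real.coe_toNNReal _ h1]
  simp

lemma char_bound {p : ℝ} (hp : p ∈ Set.Icc (0 : ℝ) 1) {t : ℝ} (ht : |t| ≤ Real.pi) :
    ‖(p : ℂ) * Complex.exp (t * Complex.I) + (1 - p)‖ ≤
      Real.exp (-(p * (1 - p) * (2 / Real.pi ^ 2)) * t ^ 2) := by
  have h1 : 0 ≤ 1 - p := by linarith [hp.2]
  have hpq : 0 ≤ p * (1 - p) := mul_nonneg hp.1 h1
  have hsq : ‖(p : ℂ) * Complex.exp (t * Complex.I) + (1 - p)‖ ^ 2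
      = 1 - 2 * (p * (1 - p)) * (1 - Real.cos t) := by
    rw [Complex.sq_norm, Complex.normSq_apply]
    simp only [Complex.add_re, Complex.mul_re, Complex.exp_ofReal_mul_I_re,
      Complex.exp_ofReal_mul_I_im, Complex.ofReal_re, Complex.ofReal_im, Complex.add_im,
      Complex.mul_im, Complex.sub_re, Complex.sub_im, Complex.one_re, Complex.one_im]
    have := Real.sin_sq_add_cos_sq t
    linear_combination p ^ 2 * this
  have hcos := Real.cos_le_one_sub_mul_cos_sq ht
  refine le_of_sq_le_sq ?_ (Real.exp_nonneg _)
  rw [hsq, ← Real.exp_nat_mul]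
  refine le_trans ?_ (Real.add_one_le_exp _)
  have := mul_le_mul_of_nonneg_left hcos hpq
  push_cast
  nlinarith

lemma orth (k : ℤ) : ∫ t in (-Real.pi)..Real.pi, Complex.exp (t * Complex.I * k) =
    if k = 0 then ((2 * Real.pi : ℝ) : ℂ) else 0 := by
  split_ifs with h
  · subst h; simp; ring
  · have hc : Complex.I * k ≠ 0 := by simp [h]
    have := integral_exp_mul_complex (a := -Real.pi) (b := Real.pi) hc
    have e : ∀ t : ℝ, (t : ℂ) * Complex.I * k = Complex.I * k * t := fun t => by ring
    simp_rw [e]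
    rw [this, div_eq_zero_iff]
    left
    rw [sub_eq_zero, Complex.exp_eq_exp_iff_exists_int]
    exact ⟨k, by push_cast; ring⟩

/-- Anticoncentration of signed binomial sums. -/
lemma anti {n : ℕ} {p : ℝ} (hp : p ∈ Set.Icc (0 : ℝ) 1) (hpos : 0 < n * p * (1 - p))
    (c : Fin n → Bool) (k : ℤ) :
    (rowM n p).real {r | rowS (fun j => sgnZ (c j)) r = k} ≤
      √(Real.pi / (n * p * (1 - p) * (2 / Real.pi ^ 2))) := by
  classical
  set b : ℝ := n * p * (1 - p) * (2 / Real.pi ^ 2) with hb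
  have hbpos : 0 < b := by have := Real.pi_pos; positivity
  set S : (Fin n → Bool) → ℤ := rowS (fun j => sgnZ (c j)) with hS
  -- characteristic function
  have hchar : ∀ t : ℝ, |t| ≤ Real.pi →
      ‖∑ r, ((rowM n p).real {r} : ℂ) * Complex.exp (t * Complex.I * (S r - k : ℤ))‖
        ≤ Real.exp (-b * t ^ 2) := by
    intro t ht
    have e1 : ∑ r, ((rowM n p).real {r} : ℂ) * Complex.exp (t * Complex.I * (S r - k : ℤ)) =
        Complex.exp (((-k * t : ℝ) : ℂ) * Complex.I) *
        ∏ j, ((p : ℂ) * Complex.exp (((sgnZ (c j) * t : ℝ) : ℂ) * Complex.I) + (1 - p)) := by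
      have h1 : ∏ j, ((p : ℂ) * Complex.exp (((sgnZ (c j) * t : ℝ) : ℂ) * Complex.I) + (1 - p)) =
          ∫ r, ∏ j, Complex.exp (((sgnZ (c j) * t : ℝ) : ℂ) * Complex.I * bitZ (r j))
            ∂(rowM n p) := by
        unfold rowM
        rw [integral_fintype_prod_eq_prod (fun j x =>
          Complex.exp (((sgnZ (c j) * t : ℝ) : ℂ) * Complex.I * bitZ x))]
        refine Finset.prod_congr rfl fun j _ => ?_
        rw [bern_integral hp]
        simp [bitZ]
      rw [h1, integral_fintype (.of_finite), Finset.mul_sum]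
      refine Finset.sum_congr rfl fun r _ => ?_
      rw [← Complex.exp_sum, Complex.real_smul, mul_left_comm, ← Complex.exp_add]
      congr 2
      simp only [hS, rowS]
      push_cast
      rw [mul_sub, Finset.mul_sum, sub_eq_add_neg, add_comm]
      congr 1
      · ring
      · exact Finset.sum_congr rfl fun j _ => by ring
    rw [e1, norm_mul, Complex.norm_exp_ofReal_mul_I, one_mul, norm_prod]
    have h2 : ∀ j ∈ Finset.univ,
        ‖(p : ℂ) * Complex.exp (((sgnZ (c j) * t : ℝ) : ℂ) * Complex.I) + (1 - p)‖ ≤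
        Real.exp (-(p * (1 - p) * (2 / Real.pi ^ 2)) * t ^ 2) := by
      intro j _
      have hs : |(sgnZ (c j) * t : ℝ)| ≤ Real.pi := by
        unfold sgnZ; split_ifs <;> simpa using ht
      have hs2 : (sgnZ (c j) * t : ℝ) ^ 2 = t ^ 2 := by
        unfold sgnZ; split_ifs <;> simp
      have := char_bound hp hs
      rwa [hs2] at this
    refine (Finset.prod_le_prod (fun _ _ => norm_nonneg _) h2).trans ?_
    rw [Finset.prod_const, Finset.card_univ, Fintype.card_fin, ← Real.exp_nat_mul]
    refine le_of_eq (congrArg _ ?_)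
    rw [hb]; ring
  -- inversion
  have hinv : ((2 * Real.pi * (rowM n p).real {r | S r = k} : ℝ) : ℂ) =
      ∫ t in (-Real.pi)..Real.pi,
        ∑ r, ((rowM n p).real {r} : ℂ) * Complex.exp (t * Complex.I * (S r - k : ℤ)) := by
    rw [intervalIntegral.integral_finsetSum]
    · simp_rw [intervalIntegral.integral_const_mul, orth]
      have : (rowM n p).real {r | S r = k} = ∑ r, if S r = k then (rowM n p).real {r} else 0 := by
        rw [← Finset.sum_filter, sum_measureReal_singleton]
        congr 1; ext r; simp
      rw [this]
      push_cast
      rw [Finset.mul_sum]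
      refine Finset.sum_congr rfl fun r _ => ?_
      by_cases h : S r = k
      · simp [h]; ring
      · simp [h, sub_eq_zero]
    · intro r _
      apply Continuous.intervalIntegrable
      fun_prop
  have hpi := Real.pi_pos
  have hle : 2 * Real.pi * (rowM n p).real {r | S r = k} ≤ √(Real.pi / b) := by
    have h0 : 0 ≤ 2 * Real.pi * (rowM n p).real {r | S r = k} := by positivity
    have := congrArg norm hinv
    rw [Complex.norm_real, Real.norm_of_nonneg h0] at this
    rw [this]
    refine (intervalIntegral.norm_integral_le_of_norm_le (g := fun t => Real.exp (-b * t ^ 2))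
      (by linarith) ?_ ?_).trans ?_
    · refine Eventually.of_forall fun t ht => hchar t (abs_le.2 ⟨ht.1.le, ht.2⟩)
    · apply Continuous.intervalIntegrable; fun_prop
    · rw [intervalIntegral.integral_of_le (by linarith), ← integral_gaussian]
      exact setIntegral_le_integral (integrable_exp_neg_mul_sq hbpos)
        (Eventually.of_forall fun t => (Real.exp_nonneg _))
  have h3 : 0 ≤ (rowM n p).real {r | S r = k} := measureReal_nonneg
  nlinarith [Real.pi_gt_three]

lemma real_eq_sum {n : ℕ} (p : ℝ) (P : (Fin n → Bool) → Prop) [DecidablePred P] :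
    (rowM n p).real {r | P r} = ∑ r, (if P r then 1 else 0) * (rowM n p).real {r} := by
  simp_rw [ite_mul, one_mul, zero_mul]
  rw [← Finset.sum_filter, sum_measureReal_singleton]
  congr 1; ext r; simp

lemma integral_ncard {n : ℕ} (p : ℝ) {α : Type*} [Fintype α]
    (Q : α → (Fin n → Fin n → Bool) → Prop) :
    ∫ A, (({c | Q c A} : Set α).ncard : ℝ) ∂(diMeasure n p) =
      ∑ c, (diMeasure n p).real {A | Q c A} := by
  classical
  have h : ∀ A, (({c | Q c A} : Set α).ncard : ℝ) =
      ∑ c, Set.indicator {A | Q c A} (1 : (Fin n → Fin n → Bool) → ℝ) A := by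
    intro A
    rw [Set.ncard_eq_toFinset_card', Set.toFinset_ofPred, Finset.card_filter]
    push_cast
    refine Finset.sum_congr rfl fun c _ => ?_
    simp [Set.indicator_apply]
  simp_rw [h]
  rw [integral_finsetSum _ (fun _ _ => .of_finite)]
  exact Finset.sum_congr rfl fun c _ => integral_indicator_one .of_discrete

/-- probability of the (slack) quadrant -/
noncomputable def quad {n : ℕ} (p : ℝ) (g : Fin n → Bool × Bool) (i : Bool × Bool) : ℝ :=
  (rowM n p).real {r | sgnZ i.1 * rowS (fun j => sgnZ (g j).1) r ≤ 1 ∧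
    sgnZ i.2 * rowS (fun j => sgnZ (g j).2) r ≤ 1}

lemma rowS_perm {n : ℕ} (s : Fin n → ℤ) (e : Equiv.Perm (Fin n)) (r : Fin n → Bool) :
    rowS (fun j => s (e j)) r = rowS s (r ∘ e.symm) := by
  unfold rowS
  rw [← Equiv.sum_comp e (fun j => s j * bitZ ((r ∘ e.symm) j))]
  simp

lemma quad_perm {n : ℕ} (p : ℝ) (g : Fin n → Bool × Bool) (e : Equiv.Perm (Fin n)) :
    quad p (fun j => g (e j)) = quad p g := by
  ext i
  unfold quad
  have h1 : ∀ r, rowS (fun j => sgnZ (g (e j)).1) r = rowS (fun j => sgnZ (g j).1) (r ∘ e.symm) :=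
    fun r => rowS_perm (fun j => sgnZ (g j).1) e r
  have h2 : ∀ r, rowS (fun j => sgnZ (g (e j)).2) r = rowS (fun j => sgnZ (g j).2) (r ∘ e.symm) :=
    fun r => rowS_perm (fun j => sgnZ (g j).2) e r
  simp_rw [h1, h2]
  exact row_perm p e.symm (fun r => sgnZ i.1 * rowS (fun j => sgnZ (g j).1) r ≤ 1 ∧
    sgnZ i.2 * rowS (fun j => sgnZ (g j).2) r ≤ 1)

lemma pointwise (a b : ℤ) :
    ∑ i : Bool × Bool, (if sgnZ i.1 * a ≤ 1 ∧ sgnZ i.2 * b ≤ 1 then (1 : ℝ) else 0) ≤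
      1 + ∑ k ∈ Finset.Icc (-1 : ℤ) 1, ((if a = k then (1 : ℝ) else 0) +
        2 * (if b = k then (1 : ℝ) else 0)) := by
  have hI : Finset.Icc (-1 : ℤ) 1 = {-1, 0, 1} := by decide
  rw [hI, Fintype.sum_prod_type]
  simp only [Fintype.sum_bool, sgnZ]
  have ha : a = -1 ∨ a = 0 ∨ a = 1 ∨ 1 < a ∨ a < -1 := by omega
  have hb : b = -1 ∨ b = 0 ∨ b = 1 ∨ 1 < b ∨ b < -1 := by omega
  rcases ha with rfl | rfl | rfl | ha | ha <;> rcases hb with rfl | rfl | rfl | hb | hb <;>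
    grind

lemma quad_sum {n : ℕ} {p η : ℝ} (hp : p ∈ Set.Icc (0 : ℝ) 1)
    (hη : ∀ (c : Fin n → Bool) (k : ℤ),
      (rowM n p).real {r | rowS (fun j => sgnZ (c j)) r = k} ≤ η) (g : Fin n → Bool × Bool) :
    ∑ i, quad p g i ≤ 1 + 9 * η := by
  classical
  have := row_prob (n := n) hp
  set S := rowS (fun j => sgnZ (g j).1) with hS
  set T := rowS (fun j => sgnZ (g j).2) with hT
  have h1 : (1 : ℝ) = ∑ r, (rowM n p).real {r} := by
    rw [sum_measureReal_singleton]; simp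
  have e1 : ∑ i, quad p g i = ∑ r, (∑ i : Bool × Bool,
      (if sgnZ i.1 * S r ≤ 1 ∧ sgnZ i.2 * T r ≤ 1 then (1 : ℝ) else 0)) *
        (rowM n p).real {r} := by
    simp_rw [Finset.sum_mul]
    rw [Finset.sum_comm]
    refine Finset.sum_congr rfl fun i _ => ?_
    unfold quad
    rw [real_eq_sum]
  have e2 : ∑ r, (1 + ∑ k ∈ Finset.Icc (-1 : ℤ) 1, ((if S r = k then (1 : ℝ) else 0) +
        2 * (if T r = k then (1 : ℝ) else 0))) * (rowM n p).real {r} =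
      1 + ∑ k ∈ Finset.Icc (-1 : ℤ) 1, ((rowM n p).real {r | S r = k} +
        2 * (rowM n p).real {r | T r = k}) := by
    have h2 : ∀ (x y : ℝ), (1 + x) * y = y + x * y := fun x y => by ring
    simp_rw [h2]
    rw [Finset.sum_add_distrib, ← h1]
    simp_rw [Finset.sum_mul]
    rw [Finset.sum_comm]
    congr 1
    refine Finset.sum_congr rfl fun k _ => ?_
    rw [real_eq_sum, real_eq_sum, Finset.mul_sum, ← Finset.sum_add_distrib]
    exact Finset.sum_congr rfl fun r _ => by ring
  calc ∑ i, quad p g i ≤ _ := by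
        rw [e1]
        exact Finset.sum_le_sum fun r _ =>
          mul_le_mul_of_nonneg_right (pointwise (S r) (T r)) measureReal_nonneg
    _ = _ := e2
    _ ≤ 1 + ∑ k ∈ Finset.Icc (-1 : ℤ) 1, (η + 2 * η) := by
        gcongr with k _
        · exact hη (fun j => (g j).1) k
        · exact hη (fun j => (g j).2) k
    _ = _ := by simp; ring

def typ {n : ℕ} (g : Fin n → Bool × Bool) (i : Bool × Bool) : Fin (n + 1) :=
  ⟨Fintype.card {j // g j = i}, Nat.lt_succ_of_le (by
    simpa using Fintype.card_subtype_le (fun j => g j = i))⟩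

lemma typ_eq {n : ℕ} {g g' : Fin n → Bool × Bool} (h : typ g = typ g') :
    ∃ e : Equiv.Perm (Fin n), g' = fun j => g (e j) := by
  have hc : ∀ i, Fintype.card {j // g' j = i} = Fintype.card {j // g j = i} := fun i => by
    have := congrArg Fin.val (congrFun h i)
    exact this.symm
  refine ⟨Equiv.ofFiberEquiv (f := g') (g := g) fun i => Fintype.equivOfCardEq (hc i), ?_⟩
  ext1 j
  exact (Equiv.ofFiberEquiv_map (f := g') (g := g)
    (fun i => Fintype.equivOfCardEq (hc i)) j).symm

lemma second_sum {n : ℕ} {p η : ℝ} (hp : p ∈ Set.Icc (0 : ℝ) 1) (hη0 : 0 ≤ η)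
    (hη : ∀ (c : Fin n → Bool) (k : ℤ),
      (rowM n p).real {r | rowS (fun j => sgnZ (c j)) r = k} ≤ η) :
    ∑ g : Fin n → Bool × Bool, ∏ v, quad p g (g v) ≤ (n + 1 : ℝ) ^ 4 * (1 + 9 * η) ^ n := by
  classical
  have hq : ∀ (g : Fin n → Bool × Bool) i, 0 ≤ quad p g i := fun g i => measureReal_nonneg
  rw [← Finset.sum_fiberwise Finset.univ typ]
  have hb : ∀ τ ∈ (Finset.univ : Finset (Bool × Bool → Fin (n + 1))),
      ∑ g with typ g = τ, ∏ v, quad p g (g v) ≤ (1 + 9 * η) ^ n := by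
    intro τ _
    by_cases hne : ∃ g0 : Fin n → Bool × Bool, typ g0 = τ
    · obtain ⟨g0, h0⟩ := hne
      calc ∑ g with typ g = τ, ∏ v, quad p g (g v)
          = ∑ g with typ g = τ, ∏ v, quad p g0 (g v) := by
            refine Finset.sum_congr rfl fun g hg => ?_
            obtain ⟨e, he⟩ := typ_eq (h0.trans (Finset.mem_filter.1 hg).2.symm)
            have : quad p g = quad p g0 := by rw [he, quad_perm]
            rw [this]
        _ ≤ ∑ g : Fin n → Bool × Bool, ∏ v, quad p g0 (g v) :=
            Finset.sum_le_sum_of_subset_of_nonneg (Finset.subset_univ _)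
              fun g _ _ => Finset.prod_nonneg fun v _ => hq _ _
        _ = (∑ i, quad p g0 i) ^ n := (Fintype.sum_pow _ _).symm
        _ ≤ _ := pow_le_pow_left₀ (Finset.sum_nonneg fun i _ => hq _ _) (quad_sum hp hη g0) n
    · rw [Finset.sum_eq_zero]
      · positivity
      · intro g hg
        exact absurd ⟨g, (Finset.mem_filter.1 hg).2⟩ hne
  refine (Finset.sum_le_sum hb).trans ?_
  simp

lemma second_moment {n : ℕ} {p η : ℝ} (hp : p ∈ Set.Icc (0 : ℝ) 1) (hη0 : 0 ≤ η)
    (hη : ∀ (c : Fin n → Bool) (k : ℤ),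
      (rowM n p).real {r | rowS (fun j => sgnZ (c j)) r = k} ≤ η) :
    ∫ A, ((numMajBisections n A : ℝ)) ^ 2 ∂(diMeasure n p) ≤
      (n + 1 : ℝ) ^ 4 * (1 + 9 * η) ^ n := by
  let Q : (Fin n → Bool × Bool) → (Fin n → Fin n → Bool) → Prop := fun g A =>
    ∀ v, sgnZ (g v).1 * rowS (fun j => sgnZ (g j).1) (A v) ≤ 1 ∧
      sgnZ (g v).2 * rowS (fun j => sgnZ (g j).2) (A v) ≤ 1
  refine le_trans ?_ (second_sum hp hη0 hη)
  have h1 : ∫ A, ((numMajBisections n A : ℝ)) ^ 2 ∂(diMeasure n p) ≤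
      ∫ A, (({g | Q g A} : Set (Fin n → Bool × Bool)).ncard : ℝ) ∂(diMeasure n p) := by
    refine integral_mono (.of_finite) (.of_finite) fun A => ?_
    simp only
    rw [sq]
    norm_cast
    unfold numMajBisections
    rw [← Set.ncard_prod]
    refine Set.ncard_le_ncard_of_injOn (fun x j => (x.1 j, x.2 j)) ?_ ?_ (Set.toFinite _)
    · rintro ⟨c, c'⟩ ⟨h, h'⟩ v
      exact ⟨majority_imp c v (A v) ((majority_iff A c v).1 (h.2 v)),
        majority_imp c' v (A v) ((majority_iff A c' v).1 (h'.2 v))⟩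
    · rintro ⟨c, c'⟩ _ ⟨d, d'⟩ _ h
      have h2 : ∀ j, c j = d j ∧ c' j = d' j := fun j => by
        have := congrFun h j
        simpa using this
      exact Prod.ext (funext fun j => (h2 j).1) (funext fun j => (h2 j).2)
  refine h1.trans ?_
  rw [integral_ncard]
  refine le_of_eq (Finset.sum_congr rfl fun g _ => ?_)
  exact di_prod p (fun v r => sgnZ (g v).1 * rowS (fun j => sgnZ (g j).1) r ≤ 1 ∧
      sgnZ (g v).2 * rowS (fun j => sgnZ (g j).2) r ≤ 1)

lemma card_bisection (n : ℕ) :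
    n.choose (n / 2) ≤ ({c : Fin n → Bool | IsBisection c}).ncard := by
  classical
  have h : ((Finset.powersetCard (n / 2) (Finset.univ : Finset (Fin n)) :
      Finset (Finset (Fin n))) : Set (Finset (Fin n))).ncard = n.choose (n / 2) := by
    rw [Set.ncard_coe_finset, Finset.card_powersetCard]; simp
  rw [← h]
  refine Set.ncard_le_ncard_of_injOn (fun s j => decide (j ∈ s)) ?_ ?_ (Set.toFinite _)
  · intro s hs
    have hs' : s.card = n / 2 := by simpa using hs
    change IsBisection _
    unfold IsBisection
    have e1 : {v : Fin n | decide (v ∈ s) = true} = (s : Set (Fin n)) := by ext; simp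
    have e2 : {v : Fin n | decide (v ∈ s) = false} = ((sᶜ : Finset (Fin n)) : Set (Fin n)) := by
      ext; simp
    rw [e1, e2, Set.ncard_coe_finset, Set.ncard_coe_finset, Finset.card_compl, hs',
      Fintype.card_fin, abs_le]
    omega
  · intro s _ t _ h
    ext j
    simpa using congrFun h j

lemma first_moment {n : ℕ} {p : ℝ} (hp : p ∈ Set.Icc (0 : ℝ) 1) :
    1 / (n + 1 : ℝ) ≤ ∫ A, (numMajBisections n A : ℝ) ∂(diMeasure n p) := by
  classical
  unfold numMajBisections
  rw [integral_ncard p (fun c A => IsBisection c ∧ ∀ v, MajorityAt A c v)]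
  have h1 : ∀ c : Fin n → Bool, (if IsBisection c then (1 / 2 : ℝ) ^ n else 0) ≤
      (diMeasure n p).real {A | IsBisection c ∧ ∀ v, MajorityAt A c v} := by
    intro c
    split_ifs with hc
    · have e : {A | IsBisection c ∧ ∀ v, MajorityAt A c v} =
          {A | ∀ v, rowS (signAt c v) (A v) ≤ 0} := by
        ext A; simp [hc, majority_iff]
      rw [e, di_prod p (fun v r => rowS (signAt c v) r ≤ 0)]
      have := Finset.prod_le_prod (s := Finset.univ) (fun _ _ => by norm_num)
        (fun v _ => half_le hp c hc v)
      simpa using this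
    · exact measureReal_nonneg
  refine le_trans ?_ (Finset.sum_le_sum fun c _ => h1 c)
  rw [← Finset.sum_filter, Finset.sum_const, nsmul_eq_mul]
  have h2 := card_bisection n
  rw [Set.ncard_eq_toFinset_card', Set.toFinset_ofPred] at h2
  have h3 : 2 ^ n ≤ (n + 1) * n.choose (n / 2) := by
    rw [← Nat.sum_range_choose]
    refine (Finset.sum_le_sum fun k _ => Nat.choose_le_middle k n).trans ?_
    simp
  have h4 := h3.trans (Nat.mul_le_mul_left (n + 1) h2)
  have h5 : (2 : ℝ) ^ n ≤ (n + 1) * ((Finset.univ.filter fun c : Fin n → Bool =>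
    IsBisection c).card : ℝ) := by exact_mod_cast h4
  rw [div_pow, one_pow, mul_one_div, div_le_div_iff₀ (by positivity) (by positivity)]
  linarith

lemma poly_exp {δ : ℝ} (hδ : 0 < δ) (m : ℕ) :
    ∀ᶠ n : ℕ in atTop, ((n : ℝ) + 1) ^ m ≤ Real.exp (δ * n) := by
  have h := (Real.tendsto_pow_mul_exp_neg_atTop_nhds_zero m)
  have h2 : Tendsto (fun n : ℕ => δ * ((n : ℝ) + 1)) atTop atTop :=
    (tendsto_atTop_add_const_right _ _ tendsto_natCast_atTop_atTop).const_mul_atTop hδ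
  have h3 := h.comp h2
  have hc : 0 < δ ^ m * Real.exp (-δ) := by positivity
  filter_upwards [h3.eventually (gt_mem_nhds hc)] with n hn
  simp only [Function.comp] at hn
  rw [mul_pow, mul_assoc] at hn
  have h4 := lt_of_mul_lt_mul_left hn (by positivity)
  have e : Real.exp (-(δ * ((n : ℝ) + 1))) = Real.exp (-δ) * Real.exp (-(δ * n)) := by
    rw [← Real.exp_add]; ring_nf
  rw [e, mul_left_comm] at h4
  have h5 : ((n : ℝ) + 1) ^ m * Real.exp (-(δ * n)) < 1 := by
    have := Real.exp_pos (-δ)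
    by_contra hcon
    nlinarith
  rw [Real.exp_neg, ← div_eq_mul_inv, div_lt_one (Real.exp_pos _)] at h5
  exact h5.le

/-- If `n·pₙ·(1−pₙ) → ∞` and `Xₙ` is the number of majority bisections of
`D ~ 𝔻(n,pₙ)`, then `E[Xₙ] ≥ e^{−o(n)}` and `E[Xₙ²] ≤ e^{o(n)}`. -/
theorem majority_bisection_moments (p : ℕ → ℝ) (hp : ∀ n, p n ∈ Set.Icc (0 : ℝ) 1)
    (hgrow : Tendsto (fun n : ℕ => (n : ℝ) * p n * (1 - p n)) atTop atTop) :
    (∀ ε : ℝ, 0 < ε → ∀ᶠ n : ℕ in atTop,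
      Real.exp (-ε * n) ≤ ∫ A, (numMajBisections n A : ℝ) ∂(diMeasure n (p n))) ∧
    (∀ ε : ℝ, 0 < ε → ∀ᶠ n : ℕ in atTop,
      (∫ A, ((numMajBisections n A : ℝ)) ^ 2 ∂(diMeasure n (p n))) ≤ Real.exp (ε * n)) := by
  constructor
  · intro ε hε
    filter_upwards [poly_exp hε 1] with n hn
    refine le_trans ?_ (first_moment (hp n))
    rw [pow_one] at hn
    rw [neg_mul, Real.exp_neg, one_div]
    exact inv_anti₀ (by positivity) hn
  · intro ε hε
    have hlim : Tendsto (fun n : ℕ =>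
        √(Real.pi / ((n : ℝ) * p n * (1 - p n) * (2 / Real.pi ^ 2)))) atTop (nhds 0) := by
      have hpi := Real.pi_pos
      have h1 := (hgrow.atTop_mul_const (show 0 < 2 / Real.pi ^ 2 by positivity))
      have h2 := h1.const_div_atTop Real.pi
      simpa using h2.sqrt
    filter_upwards [poly_exp (half_pos hε) 4, hgrow.eventually_gt_atTop 0,
      hlim.eventually (gt_mem_nhds (show 0 < ε / 18 by positivity))] with n h1 h2 h3
    refine (second_moment (hp n) (Real.sqrt_nonneg _) (fun c k => anti (hp n) h2 c k)).trans ?_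
    set η := √(Real.pi / ((n : ℝ) * p n * (1 - p n) * (2 / Real.pi ^ 2))) with hη
    have hη0 : 0 ≤ η := Real.sqrt_nonneg _
    have h4 : (1 + 9 * η) ^ n ≤ Real.exp (ε / 2 * n) := by
      have : 1 + 9 * η ≤ Real.exp (ε / 2) := by
        have := Real.add_one_le_exp (ε / 2)
        linarith
      rw [mul_comm (ε / 2), Real.exp_nat_mul]
      exact pow_le_pow_left₀ (by positivity) this n
    calc ((n : ℝ) + 1) ^ 4 * (1 + 9 * η) ^ n ≤ Real.exp (ε / 2 * n) * Real.exp (ε / 2 * n) := by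
          gcongr
      _ = Real.exp (ε * n) := by rw [← Real.exp_add]; ring_nf
end

section
/- For every odd integer d with 3 ≤ d ≤ 27 and every f ∈ [0, 1/3], the second derivative satisfies Q_d''(f) ≤ 0. -/
/-- The polynomial `Q_d`: the probability that a given colour "overtakes" as the
majority colour among `d` independently uniformly 3-coloured vertices, when each vertex
is independently recoloured (to a uniformly random different colour) with probability
`f`. -/
noncomputable def Q (d : ℕ) (f : ℝ) : ℝ :=
  ∑ i ∈ Finset.Icc 1 (d / 2),
    (Nat.choose d i : ℝ) * (1 / 3 : ℝ) ^ i * (2 / 3 : ℝ) ^ (d - i) *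
      ∑ j ∈ Finset.Icc (d / 2 + 1) d, ∑ k ∈ Finset.range (i + 1),
        (Nat.choose i k : ℝ) * f ^ k * (1 - f) ^ (i - k) *
          (Nat.choose (d - i) (j + k - i) : ℝ) * (f / 2) ^ (j + k - i) *
          (1 - f / 2) ^ (d - j - k)

namespace QAux

/-- Evaluate a coefficient list. -/
def ev : List ℤ → ℝ → ℝ
  | [], _ => 0
  | a :: p, x => (a : ℝ) + x * ev p x

/-- Addition of coefficient lists. -/
def add : List ℤ → List ℤ → List ℤ
  | [], q => q
  | a :: p, [] => a :: p
  | a :: p, b :: q => (a + b) :: add p q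

/-- Scalar multiplication. -/
def smul (c : ℤ) : List ℤ → List ℤ
  | [] => []
  | a :: p => (c * a) :: smul c p

/-- Multiplication. -/
def mul : List ℤ → List ℤ → List ℤ
  | [], _ => []
  | a :: p, q => add (smul a q) (0 :: mul p q)

/-- Multiplication by `x ^ n`. -/
def shift : ℕ → List ℤ → List ℤ
  | 0, p => p
  | n + 1, p => 0 :: shift n p

/-- Powers of `1 + c x`. -/
def pw (c : ℤ) : ℕ → List ℤ
  | 0 => [1]
  | n + 1 => add (pw c n) (0 :: smul c (pw c n))

/-- Sums over a range. -/
def lsum (F : ℕ → List ℤ) : ℕ → List ℤ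
  | 0 => []
  | n + 1 => add (lsum F n) (F n)

/-- Derivative. -/
def der : List ℤ → List ℤ
  | [] => []
  | _ :: p => add p (0 :: der p)

/-- Bernstein coefficients (without binomial normalisation) for `x = g`, `u = 1 - 6 g`. -/
def bern : List ℤ → List ℤ
  | [] => []
  | a :: p => add (smul a (pw 6 p.length)) (0 :: bern p)

/-- Binomial coefficients, computed with a linear number of steps. -/
def ch (n k : ℕ) : ℕ := n.descFactorial k / k.factorial

theorem ch_eq (n k : ℕ) : ch n k = n.choose k := (Nat.choose_eq_descFactorial_div_factorial n k).symm

/-- The coefficient list of `c * x ^ a * (1 - x) ^ b`. -/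
def tm (c a b : ℕ) : List ℤ :=
  match c with
  | 0 => []
  | c + 1 => smul ((c + 1 : ℕ) : ℤ) (shift a (pw (-1) b))

/-- The integer polynomial `3 ^ d * Q d (2 g)`. -/
def P (d : ℕ) : List ℤ :=
  lsum (fun ii => smul ((ch d (1 + ii) * 2 ^ (d - (1 + ii)) : ℕ) : ℤ)
    (lsum (fun k => smul ((ch (1 + ii) k * 2 ^ k : ℕ) : ℤ)
      (shift (k + (d / 2 + 1 + k - (1 + ii)))
        (mul (pw (-2) (1 + ii - k))
          (lsum (fun jj => tm (ch (d - (1 + ii)) (d / 2 + 1 + k - (1 + ii) + jj))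
            jj (d - (d / 2 + 1 + jj) - k)) (d + 1 - (d / 2 + 1)))))) (1 + ii + 1))) (d / 2 + 1 - 1)

/-- The check. -/
def check (d : ℕ) : Bool := (bern (der (der (P d)))).all (fun a => decide (a ≤ 0))

theorem ev_add (p q : List ℤ) (x : ℝ) : ev (add p q) x = ev p x + ev q x := by
  induction p generalizing q with
  | nil => simp [add, ev]
  | cons a p ih =>
    cases q with
    | nil => simp [add, ev]
    | cons b q => simp only [add, ev, ih]; push_cast; ring

theorem ev_smul (c : ℤ) (p : List ℤ) (x : ℝ) : ev (smul c p) x = c * ev p x := by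
  induction p with
  | nil => simp [smul, ev]
  | cons a p ih => simp only [smul, ev, ih]; push_cast; ring

theorem ev_mul (p q : List ℤ) (x : ℝ) : ev (mul p q) x = ev p x * ev q x := by
  induction p with
  | nil => simp [mul, ev]
  | cons a p ih => simp only [mul, ev, ih, ev_add, ev_smul]; push_cast; ring

theorem ev_shift (n : ℕ) (p : List ℤ) (x : ℝ) : ev (shift n p) x = x ^ n * ev p x := by
  induction n with
  | zero => simp [shift]
  | succ n ih => simp only [shift, ev, ih]; push_cast; ring

theorem ev_pw (c : ℤ) (n : ℕ) (x : ℝ) : ev (pw c n) x = (1 + c * x) ^ n := by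
  induction n with
  | zero => simp [pw, ev]
  | succ n ih => simp only [pw, ev, ih, ev_add, ev_smul]; push_cast; ring

theorem ev_lsum (F : ℕ → List ℤ) (n : ℕ) (x : ℝ) :
    ev (lsum F n) x = ∑ i ∈ Finset.range n, ev (F i) x := by
  induction n with
  | zero => simp [lsum, ev]
  | succ n ih => simp only [lsum, ih, ev_add, Finset.sum_range_succ]

theorem ev_der (p : List ℤ) (x : ℝ) : HasDerivAt (ev p) (ev (der p) x) x := by
  induction p with
  | nil => exact hasDerivAt_const x (0 : ℝ)
  | cons a p ih =>
    have h := ((hasDerivAt_id x).mul ih).const_add (a : ℝ)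
    refine h.congr_deriv ?_
    simp [der, ev_add, ev]

theorem ev_tm (c a b : ℕ) (x : ℝ) : ev (tm c a b) x = c * (x ^ a * (1 - x) ^ b) := by
  cases c with
  | zero => simp [tm, ev]
  | succ c =>
    rw [tm, ev_smul, ev_shift, ev_pw]
    push_cast
    ring

theorem Q_eq (d : ℕ) (g : ℝ) : Q d (2 * g) = ev (P d) g / 3 ^ d := by
  unfold Q P
  simp only [ch_eq]
  rw [ev_lsum, Finset.sum_div, ← Finset.Ico_add_one_right_eq_Icc, Finset.sum_Ico_eq_sum_range]
  refine Finset.sum_congr rfl fun ii hi => ?_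
  have hi2 : ii < d / 2 := by simpa using hi
  obtain ⟨m, hm⟩ : ∃ m, d = (1 + ii) + m := ⟨d - (1 + ii), by omega⟩
  rw [Finset.sum_comm, ev_smul, ev_lsum]
  have h1 : ((1 : ℝ) / 3) ^ (1 + ii) * (2 / 3) ^ (d - (1 + ii)) = 2 ^ (d - (1 + ii)) / 3 ^ d := by
    have : d - (1 + ii) = m := by omega
    rw [this, hm, pow_add _ (1 + ii) m, div_pow, div_pow, one_pow]
    field_simp
  rw [mul_assoc (d.choose _ : ℝ), h1]
  push_cast
  rw [← mul_div_assoc, div_mul_eq_mul_div]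
  congr 2
  refine Finset.sum_congr rfl fun k hk => ?_
  rw [ev_smul, ev_shift, ev_mul, ev_pw, ev_lsum, ← Finset.Ico_add_one_right_eq_Icc,
    Finset.sum_Ico_eq_sum_range, Finset.mul_sum, Finset.mul_sum, Finset.mul_sum]
  refine Finset.sum_congr (by congr 1; omega) fun jj hj => ?_
  have ha : d / 2 + 1 + jj + k - (1 + ii) = d / 2 + 1 + k - (1 + ii) + jj := by omega
  rw [ev_tm, mul_div_cancel_left₀ g (two_ne_zero), ha]
  push_cast
  rw [mul_pow]
  ring

/-- Homogeneous evaluation. -/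
def hom : List ℤ → ℝ → ℝ → ℝ
  | [], _, _ => 0
  | a :: p, x, u => (a : ℝ) * u ^ p.length + x * hom p x u

theorem len_smul (c : ℤ) (p : List ℤ) : (smul c p).length = p.length := by
  induction p with
  | nil => rfl
  | cons a p ih => simp [smul, ih]

theorem len_add (p q : List ℤ) (h : p.length = q.length) : (add p q).length = p.length := by
  induction p generalizing q with
  | nil => simpa [add] using h.symm
  | cons a p ih =>
    cases q with
    | nil => simp [add]
    | cons b q => simp only [add, List.length_cons] at *; rw [ih q (by omega)]

theorem hom_smul (c : ℤ) (p : List ℤ) (x u : ℝ) : hom (smul c p) x u = c * hom p x u := by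
  induction p with
  | nil => simp [smul, hom]
  | cons a p ih => simp only [smul, hom, ih, len_smul]; push_cast; ring

theorem hom_add (p q : List ℤ) (x u : ℝ) (h : p.length = q.length) :
    hom (add p q) x u = hom p x u + hom q x u := by
  induction p generalizing q with
  | nil =>
    have : q = [] := by simpa using h.symm
    subst this; simp [add, hom]
  | cons a p ih =>
    cases q with
    | nil => simp at h
    | cons b q =>
      have h' : p.length = q.length := by simpa using h
      simp only [add, hom, ih q h', len_add p q h', h']; push_cast; ring

theorem hom_add_succ (p q : List ℤ) (x u : ℝ) (h : q.length = p.length + 1) :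
    (add p q).length = q.length ∧ hom (add p q) x u = u * hom p x u + hom q x u := by
  induction p generalizing q with
  | nil => simp [add, hom]
  | cons a p ih =>
    cases q with
    | nil => simp at h
    | cons b q =>
      have h' : q.length = p.length + 1 := by simpa using h
      obtain ⟨h1, h2⟩ := ih q h'
      refine ⟨by simp [add, h1], ?_⟩
      simp only [add, hom, h1, h2, h']; push_cast; ring

theorem hom_pw (c : ℤ) (n : ℕ) (x u : ℝ) :
    (pw c n).length = n + 1 ∧ hom (pw c n) x u = (u + c * x) ^ n := by
  induction n with
  | zero => simp [pw, hom]
  | succ n ih =>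
    obtain ⟨h1, h2⟩ := ih
    have := hom_add_succ (pw c n) (0 :: smul c (pw c n)) x u (by simp [len_smul])
    refine ⟨by rw [pw, this.1]; simp [len_smul, h1], ?_⟩
    rw [pw, this.2]
    simp only [hom, hom_smul, h2]; push_cast; ring

theorem hom_bern (p : List ℤ) (x : ℝ) :
    (bern p).length = p.length ∧ hom (bern p) x (1 - 6 * x) = ev p x := by
  induction p with
  | nil => simp [bern, hom, ev]
  | cons a p ih =>
    obtain ⟨h1, h2⟩ := ih
    obtain ⟨h3, h4⟩ := hom_pw 6 p.length x (1 - 6 * x)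
    have hl : (smul a (pw 6 p.length)).length = (0 :: bern p).length := by
      simp [len_smul, h1, h3]
    refine ⟨by rw [bern, len_add _ _ hl, len_smul, h3]; simp, ?_⟩
    rw [bern, hom_add _ _ _ _ hl, hom_smul, h4]
    simp [hom, h2, ev]

theorem hom_nonpos (p : List ℤ) (x u : ℝ) (hx : 0 ≤ x) (hu : 0 ≤ u)
    (h : p.all (fun a => decide (a ≤ 0)) = true) : hom p x u ≤ 0 := by
  induction p with
  | nil => simp [hom]
  | cons a p ih =>
    simp only [List.all_cons, Bool.and_eq_true, decide_eq_true_eq] at h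
    have h1 : (a : ℝ) ≤ 0 := by exact_mod_cast h.1
    have h2 := ih h.2
    simp only [hom]
    have := mul_nonpos_of_nonpos_of_nonneg h1 (pow_nonneg hu p.length)
    have := mul_nonpos_of_nonneg_of_nonpos hx h2
    linarith

set_option maxRecDepth 100000 in
theorem check_all (d : ℕ) (hodd : Odd d) (h3 : 3 ≤ d) (h27 : d ≤ 27) : check d = true := by
  obtain ⟨m, rfl⟩ := hodd
  have h : ∀ m ∈ List.range 14, check (2 * m + 1) = true := by decide +kernel
  exact h m (List.mem_range.2 (by omega))

end QAux

open QAux in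
/-- For every odd `3 ≤ d ≤ 27` and `f ∈ [0, 1/3]`, the polynomial `Q_d` is concave:
`Q_d''(f) ≤ 0`. -/
theorem Q_second_deriv_nonpos (d : ℕ) (hodd : Odd d) (h3 : 3 ≤ d) (h27 : d ≤ 27)
    (f : ℝ) (hf : f ∈ Set.Icc (0 : ℝ) (1 / 3)) :
    deriv (deriv (Q d)) f ≤ 0 := by
  have hQ : Q d = fun f => ev (P d) (f / 2) / 3 ^ d := by
    funext f
    rw [← Q_eq, mul_div_cancel₀]
    norm_num
  have h1 : deriv (Q d) = fun f => ev (der (P d)) (f / 2) * (1 / 2) / 3 ^ d := by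
    funext f
    rw [hQ]
    exact (((ev_der (P d) (f / 2)).comp f ((hasDerivAt_id f).div_const 2)).div_const _).deriv
  have h2 : deriv (deriv (Q d)) f = ev (der (der (P d))) (f / 2) * (1 / 2) * (1 / 2) / 3 ^ d := by
    rw [h1]
    exact ((((ev_der (der (P d)) (f / 2)).comp f
      ((hasDerivAt_id f).div_const 2)).mul_const _).div_const _).deriv
  have hc : check d = true := check_all d hodd h3 h27
  obtain ⟨hf0, hf1⟩ := hf
  have h4 := hom_nonpos _ (f / 2) (1 - 6 * (f / 2)) (by linarith) (by linarith) hc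
  rw [(hom_bern _ _).2] at h4
  rw [h2]
  have : (0 : ℝ) < 3 ^ d := by positivity
  apply div_nonpos_of_nonpos_of_nonneg _ this.le
  linarith
end
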